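/- arXiv:0806.2561 — 5 statements merged into one kernel-verified Lean document; each statement's English description precedes it below -/
import Mathlib

section
/- Suppose b is locally bounded on ℝ and (V, x1*, x2*) is a nontrivial solution of the free boundary problem (2.15)–(2.17). If y ∈ [x1*, x2*], V attains a local maximum at y (one-sided if y is an endpoint) and V(y) ≥ 0, then f(y) ≥ 0. -/
/-!
Suppose `f y < 0`. By the shape of `f` and the local boundedness of `1 / f`, the function `f` is
bounded above by a negative constant near `y`. The derivative of `V` vanishes at `y`: at an
interior point by Fermat's theorem, at `x2` by hypothesis, and at `x1` because the integral
equation extends to the closed interval by continuity (`integral_eq_on_Icc`). Since `V y ≥ 0` and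
`b` is locally bounded, `lam * V - b * V' - f > 0` near `y` (`drift_eventually_pos`), so the
integral equation makes `V'` strictly positive just to the right of `y` and strictly negative just
to the left. By the mean value theorem `V` then exceeds `V y` arbitrarily close to `y`, on the
right if `y < x2` and on the left if `y = x2`, so `y` is not a local maximum.
-/

open MeasureTheory Set Filter

noncomputable section

def LocBddAt (F : ℝ → ℝ) (x : ℝ) : Prop :=
  ∃ ε > 0, ∃ C : ℝ, ∀ y ∈ Set.Ioo (x - ε) (x + ε), |F y| ≤ C

/-- shape of `f` as in Figure 1 -/
def Shape (f : ℝ → ℝ) (x1l x1r x2l x2r : ℝ) : Prop :=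
  x1l ≤ x1r ∧ x1r < x2l ∧ x2l ≤ x2r ∧
  (∀ x ∈ Set.Ioo x1r x2l, 0 < f x) ∧
  (∀ x ∈ Set.Icc x1l x1r ∪ Set.Icc x2l x2r, f x = 0) ∧
  (∀ x ∈ Set.Iio x1l ∪ Set.Ioi x2r, f x < 0)

/-- Engelbert–Schmidt condition (2.2) together with Borel measurability -/
def ES (b σ : ℝ → ℝ) : Prop :=
  Measurable b ∧ Measurable σ ∧ (∀ x, σ x ≠ 0) ∧
  LocallyIntegrable (fun x => 1 / (σ x) ^ 2) volume ∧
  LocallyIntegrable (fun x => b x / (σ x) ^ 2) volume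

/-- condition (2.3) -/
def Cond23 (f σ : ℝ → ℝ) (x1l x1r x2l x2r : ℝ) : Prop :=
  LocallyIntegrable (fun x => f x / (σ x) ^ 2) volume ∧
  ∀ x ∉ Set.Icc x1l x1r ∪ Set.Icc x2l x2r, LocBddAt (fun y => 1 / f y) x

/-- `b` is locally bounded on `ℝ` -/
def LocBdd (b : ℝ → ℝ) : Prop := ∀ x : ℝ, LocBddAt b x

/-- a solution of the free boundary problem (2.15)–(2.17): `V = 0` outside `(x1, x2)`,
`V ∈ C¹([x1, x2])` (with one-sided derivatives at the endpoints), the integral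
equation (2.15) holds on `(x1, x2)`, and `V′(x2) = 0`. -/
def SolFBP1517 (b σ f : ℝ → ℝ) (lam : ℝ) (V : ℝ → ℝ) (x1 x2 : ℝ) : Prop :=
  x1 < x2 ∧
  (∀ x ∉ Set.Ioo x1 x2, V x = 0) ∧
  ∃ V' : ℝ → ℝ,
    (∀ x ∈ Set.Icc x1 x2, HasDerivWithinAt V (V' x) (Set.Icc x1 x2) x) ∧
    ContinuousOn V' (Set.Icc x1 x2) ∧
    (∀ x ∈ Set.Ioo x1 x2,
      V' x = ∫ t in x1..x, (2 / (σ t) ^ 2) * (lam * V t - b t * V' t - f t)) ∧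
    V' x2 = 0

/-- The integrand of the integral equation. -/
def integrand (b σ f : ℝ → ℝ) (lam : ℝ) (V V' : ℝ → ℝ) (t : ℝ) : ℝ :=
  (2 / (σ t) ^ 2) * (lam * V t - b t * V' t - f t)

theorem integrand_intervalIntegrable {b σ f : ℝ → ℝ} {lam : ℝ} {V V' : ℝ → ℝ} {x1 x2 : ℝ}
    (h12 : x1 ≤ x2) (hES : ES b σ) (hfσ : LocallyIntegrable (fun x => f x / (σ x) ^ 2) volume)
    (hV : ContinuousOn V (Icc x1 x2)) (hV' : ContinuousOn V' (Icc x1 x2)) :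
    IntervalIntegrable (integrand b σ f lam V V') volume x1 x2 := by
  obtain ⟨-, -, -, h1, h2⟩ := hES
  have i1 : IntervalIntegrable (fun x => 1 / (σ x) ^ 2) volume x1 x2 :=
    (h1.integrableOn_isCompact isCompact_uIcc).intervalIntegrable
  have i2 : IntervalIntegrable (fun x => b x / (σ x) ^ 2) volume x1 x2 :=
    (h2.integrableOn_isCompact isCompact_uIcc).intervalIntegrable
  have i3 : IntervalIntegrable (fun x => f x / (σ x) ^ 2) volume x1 x2 :=
    (hfσ.integrableOn_isCompact isCompact_uIcc).intervalIntegrable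
  rw [← uIcc_of_le h12] at hV hV'
  have key := (((i1.mul_continuousOn hV).const_mul (2 * lam)).sub
    ((i2.mul_continuousOn hV').const_mul 2)).sub (i3.const_mul 2)
  refine key.congr (fun t _ => ?_)
  simp only [integrand]
  ring

/-- The integral equation, given on the open interval, extends to both endpoints by continuity. -/
theorem integral_eq_on_Icc {g V' : ℝ → ℝ} {x1 x2 : ℝ} (h12 : x1 < x2)
    (hg : IntervalIntegrable g volume x1 x2) (hV' : ContinuousOn V' (Icc x1 x2))
    (heq : ∀ x ∈ Ioo x1 x2, V' x = ∫ t in x1..x, g t) :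
    ∀ x ∈ Icc x1 x2, V' x = ∫ t in x1..x, g t := by
  have hc : ContinuousOn (fun x => ∫ t in x1..x, g t) (Icc x1 x2) := by
    have := intervalIntegral.continuousOn_primitive_interval' hg left_mem_uIcc
    rwa [uIcc_of_le h12.le] at this
  have h : EqOn V' (fun x => ∫ t in x1..x, g t) (Ioo x1 x2) := heq
  exact h.of_subset_closure hV' hc Ioo_subset_Icc_self (closure_Ioo h12.ne).ge

theorem eventually_le_neg {f σ : ℝ → ℝ} {x1l x1r x2l x2r y : ℝ}
    (hf : Shape f x1l x1r x2l x2r) (h23 : Cond23 f σ x1l x1r x2l x2r) (hy : f y < 0) :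
    ∃ c > 0, ∀ᶠ t in nhds y, f t ≤ -c := by
  obtain ⟨h1, h2, h3, hpos, hzero, hneg⟩ := hf
  have hyn : y ∉ Icc x1l x1r ∪ Icc x2l x2r := fun h => hy.ne (hzero y h)
  have hout : y ∈ Iio x1l ∪ Ioi x2r := by
    by_contra hcon
    simp only [mem_union, mem_Iio, mem_Ioi, mem_Icc, not_or, not_and, not_lt, not_le]
      at hcon hyn
    have ha : x1r < y := hyn.1 hcon.1
    have hb : y < x2l := by
      by_contra hc
      exact absurd (hyn.2 (not_lt.mp hc)) (not_lt.mpr hcon.2)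
    exact absurd (hpos y ⟨ha, hb⟩) (not_lt.mpr hy.le)
  obtain ⟨ε, hε, C, hC⟩ := h23.2 y hyn
  have hC0 : 0 < C :=
    lt_of_lt_of_le (abs_pos.mpr (one_div_ne_zero hy.ne)) (hC y ⟨by linarith, by linarith⟩)
  refine ⟨1 / C, by positivity, ?_⟩
  filter_upwards [(isOpen_Iio.union isOpen_Ioi).mem_nhds hout,
    Ioo_mem_nhds (show y - ε < y by linarith) (show y < y + ε by linarith)] with t ht1 ht2
  have hft := hneg t ht1
  have h := hC t ht2
  rw [abs_div, abs_one, abs_of_neg hft] at h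
  have := (one_div_le (by linarith) hC0).mp h
  linarith

theorem drift_eventually_pos {b f V V' : ℝ → ℝ} {lam y c : ℝ} {s : Set ℝ} (hlam : 0 ≤ lam)
    (hb : LocBddAt b y) (hc : 0 < c) (hf : ∀ᶠ t in nhds y, f t ≤ -c)
    (hV : ContinuousWithinAt V s y) (hV' : ContinuousWithinAt V' s y)
    (hVy : 0 ≤ V y) (hV'y : V' y = 0) :
    ∀ᶠ t in nhdsWithin y s, 0 < lam * V t - b t * V' t - f t := by
  obtain ⟨ε, hε, B, hB⟩ := hb
  have hcont : ContinuousWithinAt (fun t => lam * V t - B * |V' t|) s y :=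
    (continuousWithinAt_const.mul hV).sub (continuousWithinAt_const.mul hV'.abs)
  have hlt : -c < lam * V y - B * |V' y| := by
    have := mul_nonneg hlam hVy
    simp only [hV'y, abs_zero, mul_zero]
    linarith
  filter_upwards [hcont.eventually (lt_mem_nhds hlt), mem_nhdsWithin_of_mem_nhds hf,
    mem_nhdsWithin_of_mem_nhds
      (Ioo_mem_nhds (show y - ε < y by linarith) (show y < y + ε by linarith))] with t h1 h2 h3
  have h4 : b t * V' t ≤ B * |V' t| :=
    (le_abs_self _).trans
      ((abs_mul _ _).trans_le (mul_le_mul_of_nonneg_right (hB t h3) (abs_nonneg _)))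
  have h2' : f t ≤ -c := h2
  linarith

/-- **Lemma 2.5 (i).** If `b` is locally bounded, `(V, x1*, x2*)` is a nontrivial solution of
the free boundary problem (2.15)–(2.17), `y ∈ [x1*, x2*]`, `V` attains a local maximum at `y`
(one-sided if `y` is an endpoint) and `V(y) ≥ 0`, then `f(y) ≥ 0`. -/
theorem lemma25_i
    (b σ f : ℝ → ℝ) (lam : ℝ) (hlam : 0 ≤ lam)
    (hES : ES b σ) (hmf : Measurable f)
    (x1l x1r x2l x2r : ℝ) (hf : Shape f x1l x1r x2l x2r)
    (h23 : Cond23 f σ x1l x1r x2l x2r)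
    (hb : LocBdd b)
    (V : ℝ → ℝ) (x1 x2 : ℝ)
    (hsol : SolFBP1517 b σ f lam V x1 x2) (hnt : ∃ x, V x ≠ 0)
    (y : ℝ) (hy : y ∈ Set.Icc x1 x2)
    (hmax : IsLocalMaxOn V (Set.Icc x1 x2) y) (hVy : 0 ≤ V y) :
    0 ≤ f y := by
  obtain ⟨h12, -, V', hder, hV'c, heq, hV'2⟩ := hsol
  by_contra! hfy
  have hVc : ContinuousOn V (Icc x1 x2) := fun x hx => (hder x hx).continuousWithinAt
  have hgi := integrand_intervalIntegrable (lam := lam) h12.le hES h23.1 hVc hV'c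
  have hV'eq := integral_eq_on_Icc h12 hgi hV'c heq
  have hgi' : ∀ u ∈ Icc x1 x2, ∀ v ∈ Icc x1 x2,
      IntervalIntegrable (integrand b σ f lam V V') volume u v := by
    intro u hu v hv
    refine hgi.mono_set ?_
    rw [uIcc_of_le h12.le]
    exact OrdConnected.uIcc_subset ordConnected_Icc hu hv
  have hdiff : ∀ u ∈ Icc x1 x2, ∀ v ∈ Icc x1 x2,
      V' v - V' u = ∫ t in u..v, integrand b σ f lam V V' t := by
    intro u hu v hv
    have hx1 : x1 ∈ Icc x1 x2 := left_mem_Icc.mpr h12.le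
    rw [hV'eq u hu, hV'eq v hv]
    exact intervalIntegral.integral_interval_sub_left (hgi' _ hx1 _ hv) (hgi' _ hx1 _ hu)
  have hderI : ∀ x ∈ Ioo x1 x2, HasDerivAt V (V' x) x := fun x hx =>
    (hder x (Ioo_subset_Icc_self hx)).hasDerivAt (Icc_mem_nhds hx.1 hx.2)
  have hV'y : V' y = 0 := by
    rcases eq_or_lt_of_le hy.1 with h | h
    · rw [hV'eq y hy, ← h, intervalIntegral.integral_same]
    rcases eq_or_lt_of_le hy.2 with h' | h'
    · rw [h', hV'2]
    · exact (hmax.isLocalMax (Icc_mem_nhds h h')).hasDerivAt_eq_zero (hderI y ⟨h, h'⟩)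
  obtain ⟨c, hc, hfc⟩ := eventually_le_neg hf h23 hfy
  have hev := (drift_eventually_pos hlam (hb y) hc hfc (hVc y hy) (hV'c y hy) hVy hV'y).and hmax
  obtain ⟨δ, hδ, hball⟩ := Metric.mem_nhdsWithin_iff.mp hev
  have hloc : ∀ t ∈ Icc x1 x2, |t - y| < δ →
      0 < integrand b σ f lam V V' t ∧ V t ≤ V y := by
    intro t ht htd
    obtain ⟨h1, h2⟩ := hball ⟨Metric.mem_ball.mpr htd, ht⟩
    have := hES.2.2.1 t
    exact ⟨mul_pos (by positivity) h1, h2⟩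
  rcases lt_or_eq_of_le hy.2 with hy2 | hy2
  · obtain ⟨z, hyz, hz⟩ := exists_between (lt_min hy2 (show y < y + δ by linarith))
    have hz2 : z < x2 := hz.trans_le (min_le_left _ _)
    have hzδ : z < y + δ := hz.trans_le (min_le_right _ _)
    have hsub : ∀ t ∈ Icc y z, t ∈ Icc x1 x2 := fun t ht =>
      ⟨hy.1.trans ht.1, ht.2.trans hz2.le⟩
    have hnear : ∀ t ∈ Icc y z, |t - y| < δ := fun t ht =>
      abs_lt.mpr ⟨by linarith [ht.1], by linarith [ht.2]⟩
    obtain ⟨w, hw, hslope⟩ := exists_hasDerivAt_eq_slope V V' hyz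
      (hVc.mono hsub) (fun t ht => hderI t ⟨hy.1.trans_lt ht.1, ht.2.trans hz2⟩)
    have hwI := hsub w (Ioo_subset_Icc_self hw)
    have hpos : 0 < ∫ t in y..w, integrand b σ f lam V V' t :=
      intervalIntegral.intervalIntegral_pos_of_pos_on (hgi' y hy w hwI) (fun t ht =>
        have ht' : t ∈ Icc y z := ⟨ht.1.le, (ht.2.trans hw.2).le⟩
        (hloc t (hsub t ht') (hnear t ht')).1) hw.1
    rw [← hdiff y hy w hwI, hV'y, sub_zero, hslope] at hpos
    have hzle := (hloc z (hsub z ⟨hyz.le, le_rfl⟩) (hnear z ⟨hyz.le, le_rfl⟩)).2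
    have := div_nonpos_of_nonpos_of_nonneg (sub_nonpos.mpr hzle) (sub_pos.mpr hyz).le
    linarith
  · have hy1 : x1 < y := hy2 ▸ h12
    obtain ⟨z, hz, hzy⟩ := exists_between (max_lt hy1 (show y - δ < y by linarith))
    have hz1 : x1 < z := (le_max_left _ _).trans_lt hz
    have hzδ : y - δ < z := (le_max_right _ _).trans_lt hz
    have hsub : ∀ t ∈ Icc z y, t ∈ Icc x1 x2 := fun t ht =>
      ⟨hz1.le.trans ht.1, ht.2.trans hy.2⟩
    have hnear : ∀ t ∈ Icc z y, |t - y| < δ := fun t ht =>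
      abs_lt.mpr ⟨by linarith [ht.1], by linarith [ht.2]⟩
    obtain ⟨w, hw, hslope⟩ := exists_hasDerivAt_eq_slope V V' hzy
      (hVc.mono hsub) (fun t ht => hderI t ⟨hz1.trans ht.1, ht.2.trans_le hy.2⟩)
    have hwI := hsub w (Ioo_subset_Icc_self hw)
    have hpos : 0 < ∫ t in w..y, integrand b σ f lam V V' t :=
      intervalIntegral.intervalIntegral_pos_of_pos_on (hgi' w hwI y hy) (fun t ht =>
        have ht' : t ∈ Icc z y := ⟨(hw.1.trans ht.1).le, ht.2.le⟩
        (hloc t (hsub t ht') (hnear t ht')).1) hw.2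
    rw [← hdiff w hwI y hy, hV'y, hslope] at hpos
    have hzle := (hloc z (hsub z ⟨le_rfl, hzy.le⟩) (hnear z ⟨le_rfl, hzy.le⟩)).2
    have := div_nonneg (sub_nonneg.mpr hzle) (sub_pos.mpr hzy).le
    linarith
end
end

section
/- Suppose b is locally bounded on ℝ and (V, x1*, x2*) is a nontrivial solution of the free boundary problem (2.15)–(2.17). If y ∈ [x1*, x2*], V attains a local minimum at y (one-sided if y is an endpoint) and V(y) ≤ 0, then f(y) ≤ 0. -/
/-!
Suppose `f y > 0`. The derivative `V'` vanishes at `y`: at an interior minimum by Fermat, at `x2`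
by the boundary condition, and at `x1` because the integral equation extends to the closed interval
by continuity (`integral_equation_on_Icc`). Near `y` the function `b` is bounded, `f` is bounded
below by a positive constant, `lam * V` is at most slightly positive and `V'` is small; so the
integrand `(2 / σ²) (lam V - b V' - f)` is strictly negative near `y` (`eventually_integrand_neg`).
Integrating from `y`, where `V'` vanishes, `V'` is negative just to the right of `y` and positive
just to the left of it, so `V` is strictly below `V y` on each side of `y` that lies in `[x1, x2]`,
contradicting the local minimum (`not_isLocalMinOn_of_integrand_neg`).
-/

open MeasureTheory Set Filter

noncomputable section

/-- The right-hand side integrand of the integral equation for `V'`. -/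
def fbpIntegrand (b σ f : ℝ → ℝ) (lam : ℝ) (V V' : ℝ → ℝ) (t : ℝ) : ℝ :=
  (2 / (σ t) ^ 2) * (lam * V t - b t * V' t - f t)

lemma integrableOn_fbpIntegrand {b σ f V V' : ℝ → ℝ} {lam x1 x2 : ℝ}
    (hσ : LocallyIntegrable (fun x => 1 / (σ x) ^ 2) volume)
    (hbσ : LocallyIntegrable (fun x => b x / (σ x) ^ 2) volume)
    (hfσ : LocallyIntegrable (fun x => f x / (σ x) ^ 2) volume)
    (hV : ContinuousOn V (Icc x1 x2)) (hV' : ContinuousOn V' (Icc x1 x2)) :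
    IntegrableOn (fbpIntegrand b σ f lam V V') (Icc x1 x2) := by
  have h1 := (hσ.integrableOn_isCompact (isCompact_Icc (a := x1) (b := x2))).continuousOn_mul
    hV isCompact_Icc
  have h2 := (hbσ.integrableOn_isCompact (isCompact_Icc (a := x1) (b := x2))).continuousOn_mul
    hV' isCompact_Icc
  have h3 := hfσ.integrableOn_isCompact (isCompact_Icc (a := x1) (b := x2))
  have h := ((h1.const_mul (2 * lam)).sub (h2.const_mul 2)).sub (h3.const_mul 2)
  refine h.congr (Eventually.of_forall fun t => ?_)
  simp only [fbpIntegrand, Pi.sub_apply]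
  ring

/-- Both sides are continuous on `[x1, x2]`, so an integral equation on the open interval
also holds at the endpoints. -/
lemma integral_equation_on_Icc {G V' : ℝ → ℝ} {x1 x2 : ℝ} (h12 : x1 < x2)
    (hG : IntegrableOn G (Icc x1 x2)) (hV' : ContinuousOn V' (Icc x1 x2))
    (heq : ∀ x ∈ Ioo x1 x2, V' x = ∫ t in x1..x, G t) :
    ∀ x ∈ Icc x1 x2, V' x = ∫ t in x1..x, G t := by
  have hc : ContinuousOn (fun x => ∫ t in x1..x, G t) (Icc x1 x2) := by
    have := intervalIntegral.continuousOn_primitive_interval (f := G) (μ := volume)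
      (a := x1) (b := x2) (by rwa [uIcc_of_le h12.le])
    rwa [uIcc_of_le h12.le] at this
  have h : EqOn V' (fun x => ∫ t in x1..x, G t) (Ioo x1 x2) := heq
  exact h.of_subset_closure hV' hc Ioo_subset_Icc_self (closure_Ioo h12.ne).ge

lemma eventually_integrand_neg {b σ f V V' : ℝ → ℝ} {lam y : ℝ} {s : Set ℝ} (hlam : 0 ≤ lam)
    (hσ : ∀ x, σ x ≠ 0) (hb : LocBddAt b y) (hf : LocBddAt (fun t => 1 / f t) y)
    (hpos : ∀ᶠ t in nhds y, 0 < f t) (hVy : V y ≤ 0) (hV'y : V' y = 0)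
    (hV : ContinuousWithinAt V s y) (hV' : ContinuousWithinAt V' s y) :
    ∀ᶠ t in nhdsWithin y s, fbpIntegrand b σ f lam V V' t < 0 := by
  obtain ⟨ε, hε, B, hB⟩ := hb
  obtain ⟨η, hη, C, hC⟩ := hf
  have hfy : 0 < f y := hpos.self_of_nhds
  have hC0 : 0 < C := by
    have h1 := hC y ⟨by linarith, by linarith⟩
    have h2 : 0 < 1 / f y := by positivity
    exact h2.trans_le ((le_abs_self _).trans h1)
  have hcont : ContinuousWithinAt (fun t => lam * V t + B * |V' t|) s y := by fun_prop
  have hlt : lam * V y + B * |V' y| < 1 / C := by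
    have h1 : lam * V y ≤ 0 := mul_nonpos_of_nonneg_of_nonpos hlam hVy
    have h2 : 0 < 1 / C := by positivity
    simp only [hV'y, abs_zero, mul_zero]
    linarith
  have hsmall := hcont.eventually (eventually_lt_nhds hlt)
  have hN1 : ∀ᶠ t in nhdsWithin y s, t ∈ Ioo (y - ε) (y + ε) :=
    mem_nhdsWithin_of_mem_nhds (Ioo_mem_nhds (by linarith) (by linarith))
  have hN2 : ∀ᶠ t in nhdsWithin y s, t ∈ Ioo (y - η) (y + η) :=
    mem_nhdsWithin_of_mem_nhds (Ioo_mem_nhds (by linarith) (by linarith))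
  filter_upwards [hsmall, hN1, hN2, mem_nhdsWithin_of_mem_nhds hpos] with t ht h1 h2 h3
  replace h3 : 0 < f t := h3
  have hft : 1 / C ≤ f t := by
    have h4 : 1 / f t ≤ C := (le_abs_self _).trans (hC t h2)
    exact (one_div_le h3 hC0).mp h4
  have hbt : -(b t * V' t) ≤ B * |V' t| := by
    calc -(b t * V' t) ≤ |b t * V' t| := neg_le_abs _
      _ = |b t| * |V' t| := abs_mul _ _
      _ ≤ B * |V' t| := mul_le_mul_of_nonneg_right (hB t h1) (abs_nonneg _)
  have hσt : 0 < (σ t) ^ 2 := by have := hσ t; positivity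
  exact mul_neg_of_pos_of_neg (by positivity) (by linarith)

/-- If `V'` is the primitive of a function that is negative near a zero `y` of `V'`, then `V < V y`
beside `y`, so `y` is neither a one-sided nor a two-sided local minimum of `V`. -/
lemma not_isLocalMinOn_of_integrand_neg {G V V' : ℝ → ℝ} {x1 x2 y : ℝ} (h12 : x1 < x2)
    (hG : IntegrableOn G (Icc x1 x2))
    (hV : ∀ x ∈ Icc x1 x2, HasDerivWithinAt V (V' x) (Icc x1 x2) x)
    (heq : ∀ x ∈ Icc x1 x2, V' x = ∫ t in x1..x, G t)
    (hy : y ∈ Icc x1 x2) (hV'y : V' y = 0)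
    (hneg : ∀ᶠ t in nhdsWithin y (Icc x1 x2), G t < 0) :
    ¬ IsLocalMinOn V (Icc x1 x2) y := by
  intro hmin
  obtain ⟨δ, hδ, hball⟩ := Metric.mem_nhdsWithin_iff.mp (hneg.and hmin)
  have hnear : ∀ t ∈ Icc x1 x2, |t - y| < δ → G t < 0 ∧ V y ≤ V t := fun t ht h =>
    hball ⟨by rwa [Metric.mem_ball, Real.dist_eq], ht⟩
  have hint : ∀ u ∈ Icc x1 x2, ∀ v ∈ Icc x1 x2, IntervalIntegrable G volume u v :=
    fun u hu v hv => (hG.mono_set (uIcc_subset_Icc hu hv)).intervalIntegrable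
  have hdiff : ∀ u ∈ Icc x1 x2, ∀ v ∈ Icc x1 x2, V' v - V' u = ∫ t in u..v, G t := by
    intro u hu v hv
    have h1 : x1 ∈ Icc x1 x2 := left_mem_Icc.mpr h12.le
    rw [heq u hu, heq v hv, intervalIntegral.integral_interval_sub_left
      (hint _ h1 _ hv) (hint _ h1 _ hu)]
  have hdecr : ∀ u ∈ Icc x1 x2, ∀ v ∈ Icc x1 x2, u < v →
      (∀ t ∈ Ioo u v, |t - y| < δ) → V' v < V' u := by
    intro u hu v hv huv h
    have hp : 0 < ∫ t in u..v, -G t :=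
      intervalIntegral.intervalIntegral_pos_of_pos_on (hint u hu v hv).neg
        (fun t ht => neg_pos.mpr
          (hnear t ⟨hu.1.trans ht.1.le, ht.2.le.trans hv.2⟩ (h t ht)).1) huv
    rw [intervalIntegral.integral_neg, ← hdiff u hu v hv] at hp
    linarith
  have hmvt : ∀ u ∈ Icc x1 x2, ∀ v ∈ Icc x1 x2, u < v →
      ∃ c ∈ Ioo u v, V' c = (V v - V u) / (v - u) := by
    intro u hu v hv huv
    have hsub : Icc u v ⊆ Icc x1 x2 := Icc_subset_Icc hu.1 hv.2
    refine exists_hasDerivAt_eq_slope V V' huv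
      (fun x hx => ((hV x (hsub hx)).continuousWithinAt).mono hsub) fun x hx => ?_
    exact (hV x (hsub (Ioo_subset_Icc_self hx))).hasDerivAt
      (Icc_mem_nhds (hu.1.trans_lt hx.1) (hx.2.trans_le hv.2))
  rcases hy.2.lt_or_eq with hlt | rfl
  · obtain ⟨z, hyz, hz⟩ := exists_between (lt_min hlt (lt_add_of_pos_right y hδ))
    obtain ⟨hz2, hzδ⟩ := lt_min_iff.mp hz
    have hzI : z ∈ Icc x1 x2 := ⟨hy.1.trans hyz.le, hz2.le⟩
    obtain ⟨c, hc, hslope⟩ := hmvt y hy z hzI hyz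
    have hcneg := hdecr y hy c ⟨hy.1.trans hc.1.le, hc.2.le.trans hzI.2⟩ hc.1 fun t ht =>
      abs_lt.mpr ⟨by linarith [ht.1], by linarith [ht.2, hc.2]⟩
    have hVz := (hnear z hzI (abs_lt.mpr ⟨by linarith, by linarith⟩)).2
    have : 0 ≤ (V z - V y) / (z - y) := div_nonneg (by linarith) (by linarith)
    linarith
  · obtain ⟨z, hz, hzy⟩ := exists_between (max_lt h12 (sub_lt_self y hδ))
    obtain ⟨hz1, hzδ⟩ := max_lt_iff.mp hz
    have hzI : z ∈ Icc x1 y := ⟨hz1.le, hzy.le⟩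
    obtain ⟨c, hc, hslope⟩ := hmvt z hzI y hy hzy
    have hcpos := hdecr c ⟨hz1.le.trans hc.1.le, hc.2.le⟩ y hy hc.2 fun t ht =>
      abs_lt.mpr ⟨by linarith [ht.1, hc.1], by linarith [ht.2]⟩
    have hVz := (hnear z hzI (abs_lt.mpr ⟨by linarith, by linarith⟩)).2
    have : (V y - V z) / (y - z) ≤ 0 :=
      div_nonpos_of_nonpos_of_nonneg (by linarith) (by linarith)
    linarith

/-- **Lemma 2.5 (ii).** If `b` is locally bounded, `(V, x1*, x2*)` is a nontrivial solution of
the free boundary problem (2.15)–(2.17), `y ∈ [x1*, x2*]`, `V` attains a local minimum at `y`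
(one-sided if `y` is an endpoint) and `V(y) ≤ 0`, then `f(y) ≤ 0`. -/
theorem lemma25_ii
    (b σ f : ℝ → ℝ) (lam : ℝ) (hlam : 0 ≤ lam)
    (hES : ES b σ) (hmf : Measurable f)
    (x1l x1r x2l x2r : ℝ) (hf : Shape f x1l x1r x2l x2r)
    (h23 : Cond23 f σ x1l x1r x2l x2r)
    (hb : LocBdd b)
    (V : ℝ → ℝ) (x1 x2 : ℝ)
    (hsol : SolFBP1517 b σ f lam V x1 x2) (hnt : ∃ x, V x ≠ 0)
    (y : ℝ) (hy : y ∈ Set.Icc x1 x2)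
    (hmin : IsLocalMinOn V (Set.Icc x1 x2) y) (hVy : V y ≤ 0) :
    f y ≤ 0 := by
  by_contra hcon
  have hfy : 0 < f y := not_le.mp hcon
  obtain ⟨-, -, hσ, hiσ, hibσ⟩ := hES
  obtain ⟨hfσ, hfinv⟩ := h23
  obtain ⟨-, -, -, hfpos, hfzero, hfneg⟩ := hf
  obtain ⟨h12, -, V', hV, hV'c, heq, hV'2⟩ := hsol
  have hynz : y ∉ Icc x1l x1r ∪ Icc x2l x2r := fun h => hfy.ne' (hfzero y h)
  have hyn : y ∉ Iio x1l ∪ Ioi x2r := fun h => hfy.not_gt (hfneg y h)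
  have hyI : y ∈ Ioo x1r x2l := by
    simp only [mem_union, mem_Icc, mem_Iio, mem_Ioi, not_or, not_and, not_le, not_lt] at hynz hyn
    refine ⟨hynz.1 hyn.1, ?_⟩
    by_contra! h
    exact (hynz.2 h).not_ge hyn.2
  have hpos : ∀ᶠ t in nhds y, 0 < f t := by
    filter_upwards [Ioo_mem_nhds hyI.1 hyI.2] with t ht using hfpos t ht
  have hVc : ContinuousOn V (Icc x1 x2) := fun x hx => (hV x hx).continuousWithinAt
  have hG : IntegrableOn (fbpIntegrand b σ f lam V V') (Icc x1 x2) :=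
    integrableOn_fbpIntegrand hiσ hibσ hfσ hVc hV'c
  have heq' := integral_equation_on_Icc h12 hG hV'c heq
  have hV'y : V' y = 0 := by
    rcases hy.1.eq_or_lt with rfl | h1
    · rw [heq' x1 hy, intervalIntegral.integral_same]
    rcases hy.2.eq_or_lt with rfl | h2
    · exact hV'2
    have hn : Icc x1 x2 ∈ nhds y := Icc_mem_nhds h1 h2
    exact (hmin.isLocalMin hn).hasDerivAt_eq_zero ((hV y hy).hasDerivAt hn)
  exact not_isLocalMinOn_of_integrand_neg h12 hG hV heq' hy hV'y
    (eventually_integrand_neg hlam hσ (hb y) (hfinv y hynz) hpos hVy hV'y (hVc y hy) (hV'c y hy))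
    hmin
end
end

section
/- Suppose b is locally bounded on ℝ and (V, x1*, x2*) is a nontrivial solution of the free boundary problem (2.15)–(2.17). Then x1* ≤ x1r and x2* ≥ x2ℓ. -/
/-!
The coefficients enter only through `p = 2λ/σ² ≥ 0`, `q = 2b/σ²` and `r = 2f/σ²`, so that `V`
solves `V'' = p V - q V' - r` in integrated form (`LinSol`).

The key fact is a one-sided comparison principle (`LinSol.deriv_nonpos`): if `V ≤ 0` and `V' ≤ 0` at
the left end of an interval on which `r ≥ 0`, then `V' ≤ 0` on the whole interval. Reflecting
`x ↦ -x` and changing signs gives: if `V ≥ 0` and `V' ≤ 0` at the right end of an interval on which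
`r ≤ 0`, then `V' ≤ 0` there as well. A solution of the free boundary problem has zero Cauchy data
at both `x1` and `x2`. If `x1 > x1r`, then on `(x1, x2)` the function `f` is first nonnegative and
then nonpositive, so `V' ≤ 0` throughout, and `V(x1) = V(x2) = 0` forces `V = 0`
(`LinSol.eq_zero`). If `x2 < x2l`, then `f` is first nonpositive and then nonnegative, and the same
argument applies to `-V`.

The comparison principle is proved directly: beyond the first point `s` where `V'` may become
positive, let `m > 0` be the maximum of `V'` on a short interval to the right of `s`. Integrating
the equation from the last point where `V' ≤ 0` up to the point where the maximum is attained bounds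
`m` by `m` times the integral of `p (c - a) + |q|` over a short interval, which is less than `m`.
-/

open MeasureTheory Set Filter

noncomputable section

/-- `V`, with derivative `V'`, solves `V'' = p V - q V' - r` on `[a, c]` in the integrated sense. -/
structure LinSol (p q r V V' : ℝ → ℝ) (a c : ℝ) : Prop where
  hp : ∀ u v, IntervalIntegrable p volume u v
  hq : ∀ u v, IntervalIntegrable q volume u v
  hr : ∀ u v, IntervalIntegrable r volume u v
  hV : ∀ x ∈ Icc a c, HasDerivWithinAt V (V' x) (Icc a c) x
  hV' : ContinuousOn V' (Icc a c)
  eqn : ∀ y ∈ Icc a c, ∀ x ∈ Icc a c, V' x - V' y = ∫ t in y..x, (p t * V t - q t * V' t - r t)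

namespace LinSol

variable {p q r V V' : ℝ → ℝ} {a c : ℝ}

lemma mono (h : LinSol p q r V V' a c) {a' c' : ℝ} (ha : a ≤ a') (hc : c' ≤ c) :
    LinSol p q r V V' a' c' where
  hp := h.hp
  hq := h.hq
  hr := h.hr
  hV x hx := (h.hV x (Icc_subset_Icc ha hc hx)).mono (Icc_subset_Icc ha hc)
  hV' := h.hV'.mono (Icc_subset_Icc ha hc)
  eqn y hy x hx := h.eqn y (Icc_subset_Icc ha hc hy) x (Icc_subset_Icc ha hc hx)

lemma neg (h : LinSol p q r V V' a c) :
    LinSol p q (fun x => -r x) (fun x => -V x) (fun x => -V' x) a c where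
  hp := h.hp
  hq := h.hq
  hr u v := (h.hr u v).neg
  hV x hx := (h.hV x hx).neg
  hV' := h.hV'.neg
  eqn y hy x hx := by
    rw [show -V' x - -V' y = -(V' x - V' y) by ring, h.eqn y hy x hx,
      ← intervalIntegral.integral_neg]
    congr 1
    ext t
    ring

lemma reflect (h : LinSol p q r V V' a c) :
    LinSol (fun x => p (-x)) (fun x => -q (-x)) (fun x => r (-x)) (fun x => V (-x))
      (fun x => -V' (-x)) (-c) (-a) where
  hp u v := by
    simpa using (IntervalIntegrable.iff_comp_neg (by simp)).1 (h.hp (-u) (-v))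
  hq u v := by
    have := (IntervalIntegrable.iff_comp_neg (by simp)).1 (h.hq (-u) (-v))
    simp only [neg_neg] at this
    exact this.neg
  hr u v := by
    simpa using (IntervalIntegrable.iff_comp_neg (by simp)).1 (h.hr (-u) (-v))
  hV x hx := by
    have hm : MapsTo (fun x : ℝ => -x) (Icc (-c) (-a)) (Icc a c) := fun y hy =>
      ⟨by linarith [hy.2], by linarith [hy.1]⟩
    have := (h.hV (-x) (hm hx)).comp x ((hasDerivAt_neg x).hasDerivWithinAt) hm
    simpa [Function.comp_def] using this
  hV' := by
    have hm : MapsTo (fun x : ℝ => -x) (Icc (-c) (-a)) (Icc a c) := fun y hy =>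
      ⟨by linarith [hy.2], by linarith [hy.1]⟩
    exact (h.hV'.comp continuous_neg.continuousOn hm).neg
  eqn y hy x hx := by
    have e := h.eqn (-x) ⟨by linarith [hx.2], by linarith [hx.1]⟩ (-y)
      ⟨by linarith [hy.2], by linarith [hy.1]⟩
    rw [← intervalIntegral.integral_comp_neg
      (fun t => p t * V t - q t * V' t - r t)] at e
    rw [show -V' (-x) - -V' (-y) = V' (-y) - V' (-x) by ring, e]
    congr 1
    ext t
    ring

lemma integrable (h : LinSol p q r V V' a c) {y x : ℝ} (hy : y ∈ Icc a c) (hx : x ∈ Icc a c) :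
    IntervalIntegrable (fun t => p t * V t - q t * V' t - r t) volume y x := by
  have hs : uIcc y x ⊆ Icc a c := (convex_Icc a c).ordConnected.uIcc_subset hy hx
  have hVc : ContinuousOn V (Icc a c) := fun t ht => (h.hV t ht).continuousWithinAt
  exact (((h.hp y x).mul_continuousOn (hVc.mono hs)).sub
    ((h.hq y x).mul_continuousOn (h.hV'.mono hs))).sub (h.hr y x)

lemma sub_le (h : LinSol p q r V V' a c) {u t C : ℝ} (hu : a ≤ u) (ht : t ≤ c) (hut : u ≤ t)
    (hC : ∀ x ∈ Icc u t, V' x ≤ C) : V t - V u ≤ C * (t - u) := by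
  have h' := h.mono hu ht
  have hd : ∀ x ∈ interior (Icc u t), HasDerivAt V (V' x) x := fun x hx =>
    (h'.hV x (interior_subset hx)).hasDerivAt (mem_interior_iff_mem_nhds.1 hx)
  exact (convex_Icc u t).image_sub_le_mul_sub_of_deriv_le
    (fun x hx => (h'.hV x hx).continuousWithinAt)
    (fun x hx => (hd x hx).differentiableAt.differentiableWithinAt)
    (fun x hx => (hd x hx).deriv ▸ hC x (interior_subset hx)) u (left_mem_Icc.2 hut) t
    (right_mem_Icc.2 hut) hut

/-- Forward comparison principle: nonpositive Cauchy data at the left end and `r ≥ 0` keep `V'`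
nonpositive. -/
lemma deriv_nonpos (h : LinSol p q r V V' a c) (hp0 : ∀ x, 0 ≤ p x)
    (hr0 : ∀ x ∈ Ioo a c, 0 ≤ r x) (hVa : V a ≤ 0) (hV'a : V' a ≤ 0) :
    ∀ x ∈ Icc a c, V' x ≤ 0 := by
  by_contra! hcon
  obtain ⟨z₀, hz₀, hz₀pos⟩ := hcon
  set S : Set ℝ := {t | t ∈ Icc a c ∧ 0 < V' t} with hS
  have hSne : S.Nonempty := ⟨z₀, hz₀, hz₀pos⟩
  have hSbdd : BddBelow S := ⟨a, fun t ht => ht.1.1⟩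
  set s := sInf S with hs
  have has : a ≤ s := le_csInf hSne fun t ht => ht.1.1
  have hsc : s ≤ c := (csInf_le hSbdd ⟨hz₀, hz₀pos⟩).trans hz₀.2
  have hbefore : ∀ t ∈ Ico a s, V' t ≤ 0 := fun t ht => by
    by_contra! hpos
    exact absurd (csInf_le hSbdd ⟨⟨ht.1, ht.2.le.trans hsc⟩, hpos⟩) (not_le.2 ht.2)
  have hV's : V' s ≤ 0 := by
    rcases has.eq_or_lt with e | hlt
    · exact e ▸ hV'a
    · have hcl : s ∈ closure (Ico a s) := by
        rw [closure_Ico hlt.ne]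
        exact right_mem_Icc.2 has
      exact ContinuousWithinAt.closure_le hcl
        ((h.hV' s ⟨has, hsc⟩).mono fun t ht => ⟨ht.1, ht.2.le.trans hsc⟩)
        continuousWithinAt_const hbefore
  have hVs : V s ≤ 0 := by
    have := h.sub_le le_rfl hsc has (C := 0) fun t ht => by
      rcases ht.2.eq_or_lt with e | hlt
      · exact e ▸ hV's
      · exact hbefore t ⟨ht.1, hlt⟩
    linarith
  set G : ℝ → ℝ := fun t => p t * (c - a) + |q t| with hG
  have hGi : ∀ u v, IntervalIntegrable G volume u v := fun u v =>
    ((h.hp u v).mul_const _).add (h.hq u v).abs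
  have hG0 : ∀ t, 0 ≤ G t := fun t =>
    add_nonneg (mul_nonneg (hp0 t) (by linarith)) (abs_nonneg _)
  -- A point `z` of `S` so close to `s` that `G` has integral less than `1` over `[s, z]`.
  obtain ⟨z, hzS, hsz, hzint⟩ : ∃ z ∈ S, s ≤ z ∧ ∫ t in s..z, G t < 1 := by
    have hcont := (intervalIntegral.continuous_primitive hGi s).continuousAt (x := s)
    have hev : ∀ᶠ z in nhds s, ∫ t in s..z, G t < 1 :=
      hcont.eventually_lt continuousAt_const (by simp)
    obtain ⟨ε, hε, hball⟩ := Metric.eventually_nhds_iff.1 hev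
    obtain ⟨z, hzS, hz⟩ := exists_lt_of_csInf_lt hSne (show sInf S < s + ε by linarith)
    have hsz : s ≤ z := csInf_le hSbdd hzS
    refine ⟨z, hzS, hsz, hball ?_⟩
    rw [Real.dist_eq, abs_of_nonneg (by linarith)]
    linarith
  have hzc : z ≤ c := hzS.1.2
  have hsub : Icc s z ⊆ Icc a c := Icc_subset_Icc has hzc
  obtain ⟨x, hx, hmax⟩ := isCompact_Icc.exists_isMaxOn (nonempty_Icc.2 hsz) (h.hV'.mono hsub)
  have hmax' : ∀ t ∈ Icc s z, V' t ≤ V' x := fun t ht => hmax ht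
  set m := V' x with hm
  have hmpos : 0 < m := hzS.2.trans_le (hmax' z (right_mem_Icc.2 hsz))
  have hVle : ∀ t ∈ Icc s z, V t ≤ (c - a) * m := fun t ht => by
    have h1 := h.sub_le has (ht.2.trans hzc) ht.1 (C := m)
      fun u hu => hmax' u ⟨hu.1, hu.2.trans ht.2⟩
    have h2 : m * (t - s) ≤ m * (c - a) :=
      mul_le_mul_of_nonneg_left (by linarith [ht.2]) hmpos.le
    linarith
  -- The last point `y` before `x` at which `V' ≤ 0`.
  have hcomp : IsCompact {t | t ∈ Icc s x ∧ V' t ≤ 0} := by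
    have hcl : IsClosed (Icc s x ∩ V' ⁻¹' Iic 0) :=
      (h.hV'.mono ((Icc_subset_Icc_right hx.2).trans hsub)).preimage_isClosed_of_isClosed
        isClosed_Icc isClosed_Iic
    exact isCompact_Icc.of_isClosed_subset hcl inter_subset_left
  obtain ⟨y, ⟨hy, hV'y⟩, hylast⟩ := hcomp.exists_isGreatest ⟨s, left_mem_Icc.2 hx.1, hV's⟩
  have hpos : ∀ t ∈ Ioo y x, 0 ≤ V' t := fun t ht => by
    by_contra! hneg
    exact absurd (hylast ⟨⟨hy.1.trans ht.1.le, ht.2.le⟩, hneg.le⟩) (not_le.2 ht.1)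
  have hyx : y ≤ x := hy.2
  have hymem : y ∈ Icc a c := hsub ⟨hy.1, hyx.trans hx.2⟩
  have hint : ∫ t in y..x, (p t * V t - q t * V' t - r t) ≤ ∫ t in y..x, G t * m := by
    refine intervalIntegral.integral_mono_on_of_le_Ioo hyx (h.integrable hymem (hsub hx))
      ((hGi y x).mul_const m) fun t ht => ?_
    have htm : t ∈ Icc s z := ⟨hy.1.trans ht.1.le, ht.2.le.trans hx.2⟩
    have h1 := mul_le_mul_of_nonneg_left (hVle t htm) (hp0 t)
    have h2 : -(q t * V' t) ≤ |q t| * m := calc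
      -(q t * V' t) ≤ |q t * V' t| := neg_le_abs _
      _ = |q t| * V' t := by rw [abs_mul, abs_of_nonneg (hpos t ht)]
      _ ≤ |q t| * m := mul_le_mul_of_nonneg_left (hmax' t htm) (abs_nonneg _)
    have h3 := hr0 t ⟨hymem.1.trans_lt ht.1, ht.2.trans_le (hsub hx).2⟩
    simp only [hG]
    linarith
  have hGmono : ∫ t in y..x, G t ≤ ∫ t in s..z, G t :=
    intervalIntegral.integral_mono_interval hy.1 hyx hx.2 (ae_of_all _ hG0) (hGi s z)
  rw [← h.eqn y hymem x (hsub hx), intervalIntegral.integral_mul_const] at hint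
  have : (∫ t in y..x, G t) * m < 1 * m := mul_lt_mul_of_pos_right (by linarith) hmpos
  linarith

/-- Backward comparison principle, obtained from `LinSol.deriv_nonpos` for `x ↦ -V (-x)`. -/
lemma deriv_nonpos_of_right (h : LinSol p q r V V' a c) (hp0 : ∀ x, 0 ≤ p x)
    (hr0 : ∀ x ∈ Ioo a c, r x ≤ 0) (hVc : 0 ≤ V c) (hV'c : V' c ≤ 0) :
    ∀ x ∈ Icc a c, V' x ≤ 0 := by
  intro x hx
  have := h.neg.reflect.deriv_nonpos (fun x => hp0 (-x))
    (fun x hx => by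
      have := hr0 (-x) ⟨by linarith [hx.2], by linarith [hx.1]⟩
      simpa using this)
    (by simpa using hVc) (by simpa using hV'c) (-x) ⟨by linarith [hx.2], by linarith [hx.1]⟩
  simpa using this

/-- Zero Cauchy data at both ends and a single sign change of `r`, from `+` to `-`, force `V = 0`. -/
lemma eq_zero (h : LinSol p q r V V' a c) (hp0 : ∀ x, 0 ≤ p x) (d : ℝ)
    (hr1 : ∀ x ∈ Ioo a c, x < d → 0 ≤ r x) (hr2 : ∀ x ∈ Ioo a c, d < x → r x ≤ 0)
    (hVa : V a = 0) (hV'a : V' a = 0) (hVc : V c = 0) (hV'c : V' c = 0) :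
    ∀ x ∈ Icc a c, V x = 0 := by
  have hle : ∀ x ∈ Icc a c, V' x ≤ 0 := fun x hx => by
    rcases le_total x d with hxd | hxd
    · exact (h.mono le_rfl hx.2).deriv_nonpos hp0
        (fun t ht => hr1 t ⟨ht.1, ht.2.trans_le hx.2⟩ (ht.2.trans_le hxd)) hVa.le hV'a.le x
        (right_mem_Icc.2 hx.1)
    · exact (h.mono hx.1 le_rfl).deriv_nonpos_of_right hp0
        (fun t ht => hr2 t ⟨hx.1.trans_lt ht.1, ht.2⟩ (hxd.trans_lt ht.1)) hVc.ge hV'c.le x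
        (left_mem_Icc.2 hx.2)
  intro x hx
  have h1 := h.sub_le le_rfl hx.2 hx.1 (C := 0) fun t ht => hle t ⟨ht.1, ht.2.trans hx.2⟩
  have h2 := h.sub_le hx.1 le_rfl hx.2 (C := 0) fun t ht => hle t ⟨hx.1.trans ht.1, ht.2⟩
  linarith

end LinSol

lemma intervalIntegrable_of_locallyIntegrable {g : ℝ → ℝ} (hg : LocallyIntegrable g volume)
    (k u v : ℝ) : IntervalIntegrable (fun x => k * g x) volume u v :=
  ((hg.integrableOn_isCompact isCompact_uIcc).intervalIntegrable).const_mul k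

/-- A solution of the free boundary problem is a `LinSol` with zero Cauchy data at both ends. The
integral equation is assumed on the open interval only; `V'(x1) = 0` and the equation at `x2` follow
by continuity. -/
lemma SolFBP1517.exists_linSol {b σ f V : ℝ → ℝ} {lam x1 x2 x1l x1r x2l x2r : ℝ} (hES : ES b σ)
    (h23 : Cond23 f σ x1l x1r x2l x2r) (hsol : SolFBP1517 b σ f lam V x1 x2) :
    ∃ V' : ℝ → ℝ, LinSol (fun t => 2 * lam * (1 / σ t ^ 2)) (fun t => 2 * (b t / σ t ^ 2))
      (fun t => 2 * (f t / σ t ^ 2)) V V' x1 x2 ∧ V' x1 = 0 ∧ V' x2 = 0 := by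
  obtain ⟨hlt, -, V', hV, hV', heq, hV'2⟩ := hsol
  obtain ⟨-, -, -, hσ, hbσ⟩ := hES
  have hVc : ContinuousOn V (Icc x1 x2) := fun t ht => (hV t ht).continuousWithinAt
  have hp := intervalIntegrable_of_locallyIntegrable hσ (2 * lam)
  have hq := intervalIntegrable_of_locallyIntegrable hbσ 2
  have hr := intervalIntegrable_of_locallyIntegrable h23.1 2
  set F : ℝ → ℝ := fun t => 2 * lam * (1 / σ t ^ 2) * V t - 2 * (b t / σ t ^ 2) * V' t
    - 2 * (f t / σ t ^ 2) with hF
  have hFi : ∀ y ∈ Icc x1 x2, ∀ x ∈ Icc x1 x2, IntervalIntegrable F volume y x := by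
    intro y hy x hx
    have hs : uIcc y x ⊆ Icc x1 x2 := (convex_Icc x1 x2).ordConnected.uIcc_subset hy hx
    exact (((hp y x).mul_continuousOn (hVc.mono hs)).sub
      ((hq y x).mul_continuousOn (hV'.mono hs))).sub (hr y x)
  have hl : x1 ∈ Icc x1 x2 := left_mem_Icc.2 hlt.le
  have hclosed : EqOn V' (fun x => ∫ t in x1..x, F t) (Icc x1 x2) := by
    have hprim : ContinuousOn (fun x => ∫ t in x1..x, F t) (Icc x1 x2) := by
      have := intervalIntegral.continuousOn_primitive_interval'
        (hFi x1 hl x2 (right_mem_Icc.2 hlt.le)) left_mem_uIcc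
      rwa [uIcc_of_le hlt.le] at this
    have hopen : EqOn V' (fun x => ∫ t in x1..x, F t) (Ioo x1 x2) := fun x hx => by
      rw [heq x hx]
      congr 1
      ext t
      simp only [hF]
      ring
    exact hopen.of_subset_closure hV' hprim Ioo_subset_Icc_self (closure_Ioo hlt.ne).ge
  refine ⟨V', ⟨hp, hq, hr, hV, hV', fun y hy x hx => ?_⟩, ?_, hV'2⟩
  · rw [hclosed hy, hclosed hx]
    exact intervalIntegral.integral_interval_sub_left (hFi x1 hl x hx) (hFi x1 hl y hy)
  · simpa using hclosed hl

/-- Only the weak signs of `f` matter, so the flat pieces `[x1l, x1r]` and `[x2l, x2r]` are merged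
with the outer half-lines on which `f < 0`. -/
lemma Shape.weak_signs {f : ℝ → ℝ} {x1l x1r x2l x2r : ℝ} (hf : Shape f x1l x1r x2l x2r) (x : ℝ) :
    (x1r < x → x < x2l → 0 ≤ f x) ∧ (x2l ≤ x → f x ≤ 0) ∧ (x ≤ x1r → f x ≤ 0) := by
  obtain ⟨-, -, -, hpos, hzero, hneg⟩ := hf
  refine ⟨fun h1 h2 => (hpos x ⟨h1, h2⟩).le, fun h => ?_, fun h => ?_⟩
  · rcases le_or_gt x x2r with h' | h'
    · exact (hzero x (Or.inr ⟨h, h'⟩)).le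
    · exact (hneg x (Or.inr h')).le
  · rcases le_or_gt x1l x with h' | h'
    · exact (hzero x (Or.inl ⟨h', h⟩)).le
    · exact (hneg x (Or.inl h')).le

/-- **Lemma 2.6 (first part).** If `b` is locally bounded and `(V, x1*, x2*)` is a nontrivial
solution of the free boundary problem (2.15)–(2.17), then `x1* ≤ x1r` and `x2* ≥ x2ℓ`. -/
theorem lemma26_boundaries
    (b σ f : ℝ → ℝ) (lam : ℝ) (hlam : 0 ≤ lam)
    (hES : ES b σ) (hmf : Measurable f)
    (x1l x1r x2l x2r : ℝ) (hf : Shape f x1l x1r x2l x2r)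
    (h23 : Cond23 f σ x1l x1r x2l x2r)
    (hb : LocBdd b)
    (V : ℝ → ℝ) (x1 x2 : ℝ)
    (hsol : SolFBP1517 b σ f lam V x1 x2) (hnt : ∃ x, V x ≠ 0) :
    x1 ≤ x1r ∧ x2l ≤ x2 := by
  obtain ⟨V', hL, hd1, hd2⟩ := hsol.exists_linSol hES h23
  obtain ⟨hlt, hout, -⟩ := hsol
  have hV1 : V x1 = 0 := hout x1 fun h => lt_irrefl _ h.1
  have hV2 : V x2 = 0 := hout x2 fun h => lt_irrefl _ h.2
  obtain ⟨x0, hx0⟩ := hnt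
  have hx0m : x0 ∈ Icc x1 x2 := by
    by_contra hn
    exact hx0 (hout x0 fun h => hn (Ioo_subset_Icc_self h))
  have hp0 : ∀ x, 0 ≤ 2 * lam * (1 / σ x ^ 2) := fun x => by positivity
  have hnn : ∀ x, 0 ≤ f x → 0 ≤ 2 * (f x / σ x ^ 2) := fun x hx => by positivity
  have hnp : ∀ x, f x ≤ 0 → 2 * (f x / σ x ^ 2) ≤ 0 := fun x hx =>
    mul_nonpos_of_nonneg_of_nonpos zero_le_two (div_nonpos_of_nonpos_of_nonneg hx (sq_nonneg _))
  constructor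
  · by_contra! hcon
    exact hx0 (hL.eq_zero hp0 x2l
      (fun x hx hxd => hnn x ((hf.weak_signs x).1 (hcon.trans hx.1) hxd))
      (fun x _ hxd => hnp x ((hf.weak_signs x).2.1 hxd.le)) hV1 hd1 hV2 hd2 x0 hx0m)
  · by_contra! hcon
    refine hx0 (neg_eq_zero.1 (hL.neg.eq_zero hp0 x1r
      (fun x _ hxd => neg_nonneg.2 (hnp x ((hf.weak_signs x).2.2 hxd.le)))
      (fun x hx hxd => neg_nonpos.2 (hnn x ((hf.weak_signs x).1 hxd (hx.2.trans hcon))))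
      ?_ ?_ ?_ ?_ x0 hx0m)) <;> simp [hV1, hV2, hd1, hd2]
end
end

section
/- Suppose b is locally bounded on ℝ and (V, x1*, x2*) is a nontrivial solution of the free boundary problem (2.15)–(2.17). Then V(x) ≥ 0 for all x ∈ ℝ. -/
/-!
The proof is a maximum principle for `V'' = (2/σ²)(lam V - b V' - f)`, read in integrated form.

The basic tool is a local comparison (`LinSys.U_nonpos_right`, `LinSys.exists_V_lt_right`): to the
right of a point where `V' = 0`, the derivative has the sign of `lam V - f`, provided that sign is
constant there, and `V` moves strictly if the sign is strict. The drift `b` is absorbed because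
`∫ |2b/σ²|` is small on short intervals.

By continuity the integral equation gives `V'(x1) = 0`, so the problem is symmetric under
reflection. Suppose that `V` takes a negative value, and let `m` be a global minimizer.

* If `m ≤ x1l`, then `f < 0` on `(x1, m)`. Because `V(x1) = V'(x1) = 0` and `f` is bounded away from
  zero near `x1`, `V` is positive at points just after `x1`; a positive interior maximum of `V` on
  `[x1, m]` is then impossible, as `lam V - f > 0` there (`LinSys.nonneg_left`). The case
  `m ≥ x2r` is the reflection.
* If `x1l < m < x2l`, then `lam V - f ≤ 0` to the right of `m`, so `V` stays equal to its minimum up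
  to the region `f > 0`, where it would have to decrease strictly (`LinSys.no_neg_min`). The case
  `x2l ≤ m < x2r` is the reflection.
-/

open MeasureTheory Set Filter

noncomputable section

/-! ### The integrated equation and its symmetries -/

/-- The pair `(V, U)`, with `U = V'` on all of `ℝ`, solves
`U' = γ (lam V - φ) - β U` on `[x1, x2]` in integrated form, with zero Cauchy data at both
endpoints. The signs of `lam` and `φ` are left free, so that the class of such systems is stable
under `V ↦ -V` and under reflection of the line. -/
structure LinSys (lam : ℝ) (β γ φ V U : ℝ → ℝ) (x1 x2 : ℝ) : Prop where
  lt : x1 < x2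
  V_zero : ∀ x ∉ Ioo x1 x2, V x = 0
  deriv : ∀ x, HasDerivAt V (U x) x
  U_cont : Continuous U
  U_left : U x1 = 0
  U_right : U x2 = 0
  γ_pos : ∀ x, 0 < γ x
  β_int : ∀ a c, IntervalIntegrable β volume a c
  γ_int : ∀ a c, IntervalIntegrable γ volume a c
  γφ_int : ∀ a c, IntervalIntegrable (fun t => γ t * φ t) volume a c
  eq : ∀ x ∈ Icc x1 x2, ∀ y ∈ Icc x1 x2,
    U y - U x = ∫ t in x..y, (γ t * (lam * V t - φ t) - β t * U t)

namespace LinSys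

variable {lam : ℝ} {β γ φ V U : ℝ → ℝ} {x1 x2 : ℝ}

theorem V_cont (h : LinSys lam β γ φ V U x1 x2) : Continuous V :=
  continuous_iff_continuousAt.2 fun x => (h.deriv x).continuousAt

theorem neg (h : LinSys lam β γ φ V U x1 x2) :
    LinSys lam β γ (fun x => -φ x) (fun x => -V x) (fun x => -U x) x1 x2 where
  lt := h.lt
  V_zero x hx := by simp [h.V_zero x hx]
  deriv x := (h.deriv x).neg
  U_cont := h.U_cont.neg
  U_left := by simp [h.U_left]
  U_right := by simp [h.U_right]
  γ_pos := h.γ_pos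
  β_int := h.β_int
  γ_int := h.γ_int
  γφ_int a c := (h.γφ_int a c).neg.congr fun t _ => by simp
  eq x hx y hy := by
    have := h.eq x hx y hy
    rw [show -U y - -U x = -(U y - U x) by ring, this, ← intervalIntegral.integral_neg]
    congr 1; ext t; ring

theorem reflect (h : LinSys lam β γ φ V U x1 x2) :
    LinSys lam (fun x => -β (-x)) (fun x => γ (-x)) (fun x => φ (-x)) (fun x => V (-x))
      (fun x => -U (-x)) (-x2) (-x1) where
  lt := by linarith [h.lt]
  V_zero x hx := h.V_zero _ fun hh => hx ⟨by linarith [hh.2], by linarith [hh.1]⟩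
  deriv x := by
    simpa [Function.comp_def] using (h.deriv (-x)).comp x (hasDerivAt_neg x)
  U_cont := (h.U_cont.comp continuous_neg).neg
  U_left := by simp [h.U_right]
  U_right := by simp [h.U_left]
  γ_pos x := h.γ_pos _
  β_int a c := by
    have := (IntervalIntegrable.iff_comp_neg (f := β) (a := -a) (b := -c)).1 (h.β_int _ _)
    rw [neg_neg, neg_neg] at this
    exact this.neg
  γ_int a c := by
    simpa using (IntervalIntegrable.iff_comp_neg (f := γ) (a := -a) (b := -c)).1 (h.γ_int _ _)
  γφ_int a c := by
    simpa using (IntervalIntegrable.iff_comp_neg (a := -a) (b := -c)).1 (h.γφ_int (-a) (-c))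
  eq x hx y hy := by
    have := h.eq (-y) ⟨by linarith [hy.2], by linarith [hy.1]⟩
      (-x) ⟨by linarith [hx.2], by linarith [hx.1]⟩
    rw [show -U (-y) - -U (-x) = U (-x) - U (-y) by ring, this,
      ← intervalIntegral.integral_comp_neg]
    congr 1; ext t; ring

theorem source_int (h : LinSys lam β γ φ V U x1 x2) (a c : ℝ) :
    IntervalIntegrable (fun t => γ t * (lam * V t - φ t)) volume a c := by
  have h1 : IntervalIntegrable (fun t => γ t * (lam * V t)) volume a c :=
    (h.γ_int a c).mul_continuousOn (continuous_const.mul h.V_cont).continuousOn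
  simpa [mul_sub] using h1.sub (h.γφ_int a c)

theorem drift_int (h : LinSys lam β γ φ V U x1 x2) (a c : ℝ) :
    IntervalIntegrable (fun t => β t * U t) volume a c :=
  (h.β_int a c).mul_continuousOn h.U_cont.continuousOn

/-! ### Local comparison to the right of a critical point -/

/-- A Gronwall-type comparison: if `U a = 0` and the source term is nonpositive to the right of `a`,
then so is `U`. On an interval `[a, d]` with `∫ |β| ≤ 1/2`, a positive maximum `M` of `U` would
satisfy `M ≤ M / 2`. -/
theorem U_nonpos_right (h : LinSys lam β γ φ V U x1 x2) {a c : ℝ} (ha : x1 ≤ a) (hac : a < c)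
    (hc : c ≤ x2) (hUa : U a = 0) (hg : ∀ t ∈ Ioo a c, γ t * (lam * V t - φ t) ≤ 0) :
    ∃ d ∈ Ioc a c, ∀ x ∈ Icc a d, U x ≤ 0 := by
  have hβn : ∀ p q, IntervalIntegrable (fun t => |β t|) volume p q := fun p q => (h.β_int p q).abs
  have hcont : Continuous fun y => ∫ t in a..y, |β t| :=
    intervalIntegral.continuous_primitive hβn a
  obtain ⟨d, hd, hdβ⟩ : ∃ d ∈ Ioc a c, ∫ t in a..d, |β t| ≤ 1 / 2 := by
    have h1 : ∀ᶠ y in nhdsWithin a (Ioi a), ∫ t in a..y, |β t| < 1 / 2 := by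
      refine (hcont.tendsto a).mono_left nhdsWithin_le_nhds |>.eventually_lt_const ?_
      simp
    obtain ⟨d, hd1, hd2⟩ := (h1.and (Ioc_mem_nhdsGT hac)).exists
    exact ⟨d, hd2, hd1.le⟩
  refine ⟨d, hd, ?_⟩
  obtain ⟨z, hz, hzmax⟩ := isCompact_Icc.exists_isMaxOn (nonempty_Icc.2 hd.1.le)
    h.U_cont.continuousOn
  suffices hzle : U z ≤ 0 from fun x hx => (hzmax hx).trans hzle
  by_contra! hpos
  -- `e` is the last point before `z` at which `U ≤ 0`.
  obtain ⟨e, ⟨he, heU⟩, hemax⟩ : ∃ e, IsGreatest (Icc a z ∩ U ⁻¹' Iic 0) e :=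
    (isCompact_Icc.inter_right (isClosed_Iic.preimage h.U_cont)).exists_isGreatest
      ⟨a, ⟨le_rfl, hz.1⟩, hUa.le⟩
  have heU' : U e ≤ 0 := heU
  have hUpos : ∀ t ∈ Ioo e z, 0 < U t := by
    intro t ht
    by_contra! hle
    exact absurd (hemax ⟨⟨he.1.trans ht.1.le, ht.2.le⟩, hle⟩) (not_le.2 ht.1)
  have heq := h.eq e ⟨ha.trans he.1, he.2.trans (hz.2.trans (hd.2.trans hc))⟩ z
    ⟨ha.trans hz.1, hz.2.trans (hd.2.trans hc)⟩
  have hle : ∫ t in e..z, (γ t * (lam * V t - φ t) - β t * U t) ≤ ∫ t in e..z, |β t| * U z := by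
    refine intervalIntegral.integral_mono_on_of_le_Ioo he.2
      ((h.source_int e z).sub (h.drift_int e z)) ((hβn e z).mul_const _) ?_
    intro t ht
    have h1 := hg t ⟨he.1.trans_lt ht.1, ht.2.trans_le (hz.2.trans hd.2)⟩
    have h2 : U t ≤ U z := hzmax ⟨he.1.trans ht.1.le, ht.2.le.trans hz.2⟩
    have h3 := hUpos t ht
    have h4 : -(β t * U t) ≤ |β t| * U t := by
      rw [← neg_mul]; exact mul_le_mul_of_nonneg_right (neg_le_abs _) h3.le
    have h5 : |β t| * U t ≤ |β t| * U z := mul_le_mul_of_nonneg_left h2 (abs_nonneg _)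
    linarith
  have hsub : ∫ t in e..z, |β t| ≤ ∫ t in a..d, |β t| :=
    intervalIntegral.integral_mono_interval he.1 he.2 hz.2
      (Eventually.of_forall fun t => abs_nonneg _) (hβn a d)
  rw [intervalIntegral.integral_mul_const] at hle
  nlinarith

theorem V_le_right (h : LinSys lam β γ φ V U x1 x2) {a c : ℝ} (ha : x1 ≤ a) (hac : a < c)
    (hc : c ≤ x2) (hUa : U a = 0) (hg : ∀ t ∈ Ioo a c, γ t * (lam * V t - φ t) ≤ 0) :
    ∃ d ∈ Ioc a c, AntitoneOn V (Icc a d) := by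
  obtain ⟨d, hd, hU⟩ := h.U_nonpos_right ha hac hc hUa hg
  refine ⟨d, hd, antitoneOn_of_deriv_nonpos (convex_Icc a d) h.V_cont.continuousOn
    (fun x _ => (h.deriv x).differentiableAt.differentiableWithinAt) fun x hx => ?_⟩
  rw [(h.deriv x).deriv]
  exact hU x (interior_subset hx)

/-- With a strictly negative source term, `V` drops below its critical value: otherwise the
antitone `V` is constant on `[a, d]`, so `U = 0` there and the source integrates to zero. -/
theorem exists_V_lt_right (h : LinSys lam β γ φ V U x1 x2) {a c : ℝ} (ha : x1 ≤ a) (hac : a < c)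
    (hc : c ≤ x2) (hUa : U a = 0) (hg : ∀ t ∈ Ioo a c, γ t * (lam * V t - φ t) < 0) :
    ∃ d ∈ Ioc a c, V d < V a := by
  obtain ⟨d, hd, hV⟩ := h.V_le_right ha hac hc hUa fun t ht => (hg t ht).le
  refine ⟨d, hd, ?_⟩
  by_contra! hle
  have hconst : ∀ x ∈ Icc a d, V x = V a := fun x hx =>
    le_antisymm (hV ⟨le_rfl, hd.1.le⟩ hx hx.1)
      (hle.trans (hV hx ⟨hd.1.le, le_rfl⟩ hx.2))
  have hU0 : ∀ x ∈ Ioo a d, U x = 0 := by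
    intro x hx
    have : V =ᶠ[nhds x] fun _ => V a := by
      filter_upwards [Ioo_mem_nhds hx.1 hx.2] with y hy using hconst y (Ioo_subset_Icc_self hy)
    exact (h.deriv x).unique ((hasDerivAt_const x (V a)).congr_of_eventuallyEq this)
  obtain ⟨y, hay, hyd⟩ := exists_between hd.1
  have heq := h.eq a ⟨ha, hac.le.trans hc⟩ y ⟨ha.trans hay.le, hyd.le.trans (hd.2.trans hc)⟩
  have hlt : 0 < ∫ t in a..y, -(γ t * (lam * V t - φ t) - β t * U t) := by
    refine intervalIntegral.intervalIntegral_pos_of_pos_on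
      ((h.source_int a y).sub (h.drift_int a y)).neg (fun t ht => ?_) hay
    have := hg t ⟨ht.1, ht.2.trans (hyd.trans_le hd.2)⟩
    rw [hU0 t ⟨ht.1, ht.2.trans hyd⟩]
    linarith
  rw [intervalIntegral.integral_neg, ← heq, hUa, hU0 y ⟨hay, hyd⟩] at hlt
  simp at hlt

theorem exists_V_gt_right (h : LinSys lam β γ φ V U x1 x2) {a c : ℝ} (ha : x1 ≤ a) (hac : a < c)
    (hc : c ≤ x2) (hUa : U a = 0) (hg : ∀ t ∈ Ioo a c, 0 < lam * V t - φ t) :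
    ∃ d ∈ Ioc a c, V a < V d := by
  obtain ⟨d, hd, hV⟩ := h.neg.exists_V_lt_right ha hac hc (by simp [hUa]) fun t ht => by
    have := mul_pos (h.γ_pos t) (hg t ht)
    linarith
  exact ⟨d, hd, by linarith⟩

/-! ### Sign of `V` on the three regions -/

/-- If `φ < 0` to the left of `x1l`, then `V ≥ 0` on `(-∞, x1l]`. The zero Cauchy data at `x1` force
`V` to become positive just after `x1`; if `V` were negative at `m`, its maximum over `[x1, m]`
would be positive and attained at an interior point, where the strict comparison contradicts
maximality. -/
theorem nonneg_left (h : LinSys lam β γ φ V U x1 x2) (hlam : 0 ≤ lam) {x1l : ℝ}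
    (hφ : ∀ x < x1l, φ x < 0) (hbd : x1 < x1l → LocBddAt (fun y => 1 / φ y) x1) :
    ∀ x ≤ x1l, 0 ≤ V x := by
  intro m hm
  by_contra! hVm
  have hmem : m ∈ Ioo x1 x2 := by
    by_contra hn
    exact hVm.ne (h.V_zero m hn)
  have hx1l : x1 < x1l := hmem.1.trans_le hm
  have hV1 : V x1 = 0 := h.V_zero x1 fun hh => lt_irrefl _ hh.1
  have hcV := h.V_cont
  -- Since `1/φ` is bounded near `x1`, `φ` stays away from `0`, while `V` tends to `0`.
  obtain ⟨y, hy, hVy⟩ : ∃ y ∈ Ioc x1 m, V x1 < V y := by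
    obtain ⟨ε, hε, C, hC⟩ := hbd hx1l
    have hφC : ∀ t ∈ Ioo (x1 - ε) (x1 + ε), t < x1l → φ t ≤ -(1 / (|C| + 1)) := by
      intro t ht htl
      have h1 := hC t ht
      have h2 := hφ t htl
      have h3 : 1 / |φ t| ≤ |C| + 1 := by
        have : |1 / φ t| = 1 / |φ t| := by rw [abs_div, abs_one]
        have h4 := le_abs_self C
        simp only [this] at h1
        linarith
      have h5 : 1 / (|C| + 1) ≤ |φ t| := by
        rw [one_div_le (by positivity) (abs_pos.2 h2.ne)]; exact h3
      rw [abs_of_neg h2] at h5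
      linarith
    have hev : ∀ᶠ t in nhds x1, -(1 / (|C| + 1)) < lam * V t := by
      refine (continuous_const.mul hcV).tendsto x1 |>.eventually_const_lt ?_
      rw [Pi.mul_apply, hV1, mul_zero]
      have : 0 < 1 / (|C| + 1) := by positivity
      linarith
    obtain ⟨l, u, hlu, hsub⟩ := mem_nhds_iff_exists_Ioo_subset.1
      (hev.and (Ioo_mem_nhds (by linarith : x1 - ε < x1) (by linarith : x1 < x1 + ε)))
    obtain ⟨d, hd, hVd⟩ := h.exists_V_gt_right (c := min u m) le_rfl (lt_min hlu.2 hmem.1)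
      ((min_le_right _ _).trans hmem.2.le) h.U_left (fun t ht => by
        have htu : t < u := ht.2.trans_le (min_le_left _ _)
        have htm : t < m := ht.2.trans_le (min_le_right _ _)
        have h1 := hsub ⟨hlu.1.trans ht.1, htu⟩
        have h2 := hφC t h1.2 (htm.trans_le hm)
        have h3 : -(1 / (|C| + 1)) < lam * V t := h1.1
        linarith)
    exact ⟨d, ⟨hd.1, hd.2.trans (min_le_right _ _)⟩, hVd⟩
  obtain ⟨q, hq, hqmax⟩ := isCompact_Icc.exists_isMaxOn (nonempty_Icc.2 hmem.1.le)
    hcV.continuousOn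
  have hVq : 0 < V q := by
    have : V y ≤ V q := hqmax ⟨hy.1.le, hy.2⟩
    linarith
  have hq1 : x1 < q := lt_of_le_of_ne hq.1 fun hh => by rw [← hh] at hVq; linarith
  have hqm : q < m := lt_of_le_of_ne hq.2 fun hh => by rw [hh] at hVq; linarith
  have hUq : U q = 0 :=
    (hqmax.isLocalMax (Icc_mem_nhds hq1 hqm)).hasDerivAt_eq_zero (h.deriv q)
  obtain ⟨l, u, hlu, hsub⟩ := mem_nhds_iff_exists_Ioo_subset.1
    ((hcV.tendsto q).eventually_const_lt hVq)
  obtain ⟨d, hd, hVd⟩ := h.exists_V_gt_right (c := min u m) hq.1 (lt_min hlu.2 hqm)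
    ((min_le_right _ _).trans hmem.2.le) hUq (fun t ht => by
      have h1 : 0 < V t := hsub ⟨hlu.1.trans ht.1, ht.2.trans_le (min_le_left _ _)⟩
      have h2 := hφ t ((ht.2.trans_le (min_le_right _ _)).trans_le hm)
      have := mul_nonneg hlam h1.le
      linarith)
  exact absurd (hqmax ⟨hq.1.trans hd.1.le, hd.2.trans (min_le_right _ _)⟩) (not_le.2 hVd)

/-- A negative global minimum cannot be attained at a point `m` from which `φ ≥ 0` up to `x1r` and
`φ > 0` on `(x1r, x2l)`: minimality propagates to the right until the region where `φ > 0`, and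
there the strict comparison contradicts it. -/
theorem no_neg_min (h : LinSys lam β γ φ V U x1 x2) (hlam : 0 ≤ lam) {x1r x2l m : ℝ}
    (hr : x1r < x2l) (hm : m < x2l) (hmin : ∀ x, V m ≤ V x) (hVm : V m < 0)
    (hφ0 : ∀ x ∈ Icc m x1r, 0 ≤ φ x) (hφ : ∀ x ∈ Ioo x1r x2l, 0 < φ x) : False := by
  have hcV := h.V_cont
  -- At any minimizer `y`, there is a right neighbourhood on which `V < 0`.
  have key : ∀ y, V y = V m → y < x2l → y ∈ Ioo x1 x2 ∧ U y = 0 ∧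
      ∃ c, y < c ∧ c ≤ x2 ∧ c ≤ x2l ∧ ∀ t ∈ Ioo y c, V t < 0 := by
    intro y hy hyl
    have hmem : y ∈ Ioo x1 x2 := by
      by_contra hn
      have := h.V_zero y hn
      linarith
    have hlm : IsLocalMin V y := Eventually.of_forall fun x => hy ▸ hmin x
    obtain ⟨l, u, hlu, hsub⟩ := mem_nhds_iff_exists_Ioo_subset.1
      ((hcV.tendsto y).eventually_lt_const (hy ▸ hVm))
    refine ⟨hmem, hlm.hasDerivAt_eq_zero (h.deriv y), min u (min x2 x2l),
      lt_min hlu.2 (lt_min hmem.2 hyl), (min_le_right _ _).trans (min_le_left _ _),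
      (min_le_right _ _).trans (min_le_right _ _), fun t ht => ?_⟩
    exact hsub ⟨hlu.1.trans ht.1, ht.2.trans_le (min_le_left _ _)⟩
  have strict : ∀ y, V y = V m → x1r ≤ y → y < x2l → False := by
    intro y hy hry hyl
    obtain ⟨hmem, hU, c, hyc, hc2, hcl, hneg⟩ := key y hy hyl
    obtain ⟨d, -, hVd⟩ := h.exists_V_lt_right hmem.1.le hyc hc2 hU fun t ht => by
      have h1 := hφ t ⟨hry.trans_lt ht.1, ht.2.trans_le hcl⟩
      have h2 := mul_nonneg hlam (neg_nonneg.2 (hneg t ht).le)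
      exact mul_neg_of_pos_of_neg (h.γ_pos t) (by linarith)
    linarith [hmin d]
  rcases le_total x1r m with hrm | hmr
  · exact strict m rfl hrm hm
  -- The set of minimizers is closed, and open to the right in `[m, x1r)`.
  have hsub : Icc m x1r ⊆ {y | V y = V m} := by
    refine IsClosed.Icc_subset_of_forall_mem_nhdsWithin
      ((isClosed_eq hcV continuous_const).inter isClosed_Icc) rfl ?_
    rintro y ⟨hy, hmy, hyr⟩
    obtain ⟨hmem, hU, c, hyc, hc2, hcl, hneg⟩ := key y hy (hyr.trans hr)
    obtain ⟨d, hd, hV⟩ := h.V_le_right hmem.1.le (lt_min hyc hyr)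
      ((min_le_left _ _).trans hc2) hU fun t ht => by
        have h1 := hφ0 t ⟨hmy.trans ht.1.le, ht.2.le.trans (min_le_right _ _)⟩
        have h2 := mul_nonneg hlam
          (neg_nonneg.2 (hneg t ⟨ht.1, ht.2.trans_le (min_le_left _ _)⟩).le)
        exact mul_nonpos_of_nonneg_of_nonpos (h.γ_pos t).le (by linarith)
    filter_upwards [Ioc_mem_nhdsGT hd.1] with t ht
    have hy' : V y = V m := hy
    exact le_antisymm (hy' ▸ hV ⟨le_rfl, hd.1.le⟩ ⟨ht.1.le, ht.2⟩ ht.1.le) (hmin t)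
  exact strict x1r (hsub ⟨hmr, le_rfl⟩) le_rfl hr

end LinSys

/-! ### From the free boundary problem to the system -/

/-- A solution of the free boundary problem is a `LinSys` with `β = 2b/σ²` and `γ = 2/σ²`. Since the
derivative vanishes at both endpoints, `V` extended by zero is differentiable on all of `ℝ`. -/
theorem LinSys.of_sol {b σ f V : ℝ → ℝ} {lam x1 x2 : ℝ} (hES : ES b σ)
    (hf : LocallyIntegrable (fun x => f x / (σ x) ^ 2) volume)
    (hsol : SolFBP1517 b σ f lam V x1 x2) :
    ∃ U, LinSys lam (fun t => 2 * (b t / (σ t) ^ 2)) (fun t => 2 * (1 / (σ t) ^ 2)) f V U x1 x2 := by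
  obtain ⟨-, -, hσ, hσi, hbi⟩ := hES
  obtain ⟨hlt, hV0, V', hder, hcont, heq, hV'2⟩ := hsol
  have ii : ∀ {F : ℝ → ℝ}, LocallyIntegrable F volume → ∀ p q, IntervalIntegrable F volume p q :=
    fun hF p q => (hF.integrableOn_isCompact isCompact_uIcc).intervalIntegrable
  set U : ℝ → ℝ := IccExtend hlt.le ((Icc x1 x2).domRestrict V') with hUdef
  have hUc : Continuous U := hcont.domRestrict.Icc_extend'
  have hUV : ∀ x ∈ Icc x1 x2, U x = V' x := fun x hx => by
    rw [hUdef, IccExtend_of_mem _ _ hx]; rfl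
  set W : ℝ → ℝ := IccExtend hlt.le ((Icc x1 x2).domRestrict V) with hWdef
  have hWc : Continuous W :=
    (ContinuousOn.domRestrict fun x hx => (hder x hx).continuousWithinAt).Icc_extend'
  have hWV : ∀ x, W x = V x := by
    intro x
    rcases le_total x x1 with h1 | h1
    · rw [hWdef, IccExtend_of_le_left _ _ h1]
      exact (hV0 x1 fun hh => lt_irrefl _ hh.1).trans
        (hV0 x fun hh => absurd hh.1 (not_lt.2 h1)).symm
    rcases le_total x2 x with h2 | h2
    · rw [hWdef, IccExtend_of_right_le _ _ h2]
      exact (hV0 x2 fun hh => lt_irrefl _ hh.2).trans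
        (hV0 x fun hh => absurd hh.2 (not_lt.2 h2)).symm
    · rw [hWdef, IccExtend_of_mem _ _ ⟨h1, h2⟩]; rfl
  have hVc : Continuous V := by rwa [← funext hWV]
  have hβ : ∀ p q, IntervalIntegrable (fun t => 2 * (b t / (σ t) ^ 2)) volume p q :=
    fun p q => (ii hbi p q).const_mul 2
  have hγ : ∀ p q, IntervalIntegrable (fun t => 2 * (1 / (σ t) ^ 2)) volume p q :=
    fun p q => (ii hσi p q).const_mul 2
  have hγφ : ∀ p q, IntervalIntegrable (fun t => 2 * (1 / (σ t) ^ 2) * f t) volume p q := by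
    intro p q
    refine ((ii hf p q).const_mul 2).congr ?_
    exact fun t _ => by ring
  set G : ℝ → ℝ := fun t => 2 * (1 / (σ t) ^ 2) * (lam * V t - f t) - 2 * (b t / (σ t) ^ 2) * U t
    with hG
  have hGi : ∀ p q, IntervalIntegrable G volume p q := by
    intro p q
    have h1 : IntervalIntegrable (fun t => 2 * (1 / (σ t) ^ 2) * (lam * V t)) volume p q :=
      (hγ p q).mul_continuousOn (continuous_const.mul hVc).continuousOn
    have h2 : IntervalIntegrable (fun t => 2 * (b t / (σ t) ^ 2) * U t) volume p q :=
      (hβ p q).mul_continuousOn hUc.continuousOn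
    simpa [hG, mul_sub] using (h1.sub (hγφ p q)).sub h2
  -- The integral equation extends from the open interval to its closure by continuity;
  -- at `x1` it yields `U x1 = 0`.
  have hint : EqOn U (fun x => ∫ t in x1..x, G t) (Icc x1 x2) := by
    rw [← closure_Ioo hlt.ne]
    refine EqOn.closure (fun x hx => ?_) hUc (intervalIntegral.continuous_primitive hGi x1)
    rw [hUV x (Ioo_subset_Icc_self hx), heq x hx]
    refine intervalIntegral.integral_congr fun t ht => ?_
    rw [uIcc_of_le hx.1.le] at ht
    simp only [hG]
    rw [hUV t ⟨ht.1, ht.2.trans hx.2.le⟩]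
    ring
  have hU1 : U x1 = 0 := by simpa using hint (left_mem_Icc.2 hlt.le)
  have hU2 : U x2 = 0 := by rw [hUV x2 (right_mem_Icc.2 hlt.le), hV'2]
  have hleft : ∀ x ≤ x1, HasDerivWithinAt V 0 (Iic x1) x := fun x hx =>
    (hasDerivWithinAt_const x (Iic x1) (0 : ℝ)).congr
      (fun y hy => hV0 y fun hh => absurd hh.1 (not_lt.2 hy))
      (hV0 x fun hh => absurd hh.1 (not_lt.2 hx))
  have hright : ∀ x, x2 ≤ x → HasDerivWithinAt V 0 (Ici x2) x := fun x hx =>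
    (hasDerivWithinAt_const x (Ici x2) (0 : ℝ)).congr
      (fun y hy => hV0 y fun hh => absurd hh.2 (not_lt.2 hy))
      (hV0 x fun hh => absurd hh.2 (not_lt.2 hx))
  have hderiv : ∀ x, HasDerivAt V (U x) x := by
    intro x
    rcases lt_trichotomy x x1 with h1 | h1 | h1
    · have : U x = 0 := by
        rw [hUdef, IccExtend_of_le_left _ _ h1.le]
        rwa [hUV x1 (left_mem_Icc.2 hlt.le)] at hU1
      rw [this]
      exact (hleft x h1.le).hasDerivAt (Iic_mem_nhds h1)
    · subst h1
      have hm := left_mem_Icc.2 hlt.le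
      have h3 := hder x hm
      rw [← hUV x hm, hU1] at h3
      rw [hU1]
      refine ((hleft x le_rfl).union h3).hasDerivAt ?_
      rw [Iic_union_Icc_eq_Iic hlt.le]
      exact Iic_mem_nhds hlt
    rcases lt_trichotomy x x2 with h2 | h2 | h2
    · rw [hUV x ⟨h1.le, h2.le⟩]
      exact (hder x ⟨h1.le, h2.le⟩).hasDerivAt (Icc_mem_nhds h1 h2)
    · subst h2
      have hm := right_mem_Icc.2 hlt.le
      have h3 := hder x hm
      rw [hV'2] at h3
      rw [hU2]
      refine (h3.union (hright x le_rfl)).hasDerivAt ?_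
      rw [Icc_union_Ici_eq_Ici hlt.le]
      exact Ici_mem_nhds hlt
    · have : U x = 0 := by
        rw [hUdef, IccExtend_of_right_le _ _ h2.le]
        exact hV'2
      rw [this]
      exact (hright x h2.le).hasDerivAt (Ici_mem_nhds h2)
  refine ⟨U, hlt, hV0, hderiv, hUc, hU1, hU2, fun x => ?_, hβ, hγ, hγφ, fun x hx y hy => ?_⟩
  · have := hσ x
    positivity
  · rw [hint hx, hint hy]
    exact intervalIntegral.integral_interval_sub_left (hGi _ _) (hGi _ _)

/-- **Lemma 2.6 (second part).** If `b` is locally bounded and `(V, x1*, x2*)` is a nontrivial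
solution of the free boundary problem (2.15)–(2.17), then `V ≥ 0` on `ℝ`. -/
theorem lemma26_nonneg
    (b σ f : ℝ → ℝ) (lam : ℝ) (hlam : 0 ≤ lam)
    (hES : ES b σ) (hmf : Measurable f)
    (x1l x1r x2l x2r : ℝ) (hf : Shape f x1l x1r x2l x2r)
    (h23 : Cond23 f σ x1l x1r x2l x2r)
    (hb : LocBdd b)
    (V : ℝ → ℝ) (x1 x2 : ℝ)
    (hsol : SolFBP1517 b σ f lam V x1 x2) (hnt : ∃ x, V x ≠ 0) :
    ∀ x : ℝ, 0 ≤ V x := by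
  intro z
  by_contra! hz
  obtain ⟨hlr1, hr, hlr2, hpos, hzero, hneg⟩ := hf
  obtain ⟨U, h⟩ := LinSys.of_sol hES h23.1 hsol
  have hcV := h.V_cont
  have hleft : ∀ x ≤ x1l, 0 ≤ V x := by
    refine h.nonneg_left hlam (fun x hx => hneg x (Or.inl hx)) fun hx => h23.2 x1 ?_
    rintro (hh | hh)
    · exact absurd hh.1 (not_le.2 hx)
    · linarith [hh.1]
  have hright : ∀ x, x2r ≤ x → 0 ≤ V x := by
    have hrefl : ∀ x ≤ -x2r, 0 ≤ V (-x) := by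
      refine h.reflect.nonneg_left hlam
        (fun x hx => hneg _ (Or.inr (show x2r < -x by linarith))) fun hx => ?_
      obtain ⟨ε, hε, C, hC⟩ := h23.2 x2 (by
        rintro (hh | hh)
        · linarith [hh.2]
        · linarith [hh.2])
      exact ⟨ε, hε, C, fun y hy => hC (-y) ⟨by linarith [hy.2], by linarith [hy.1]⟩⟩
    intro x hx
    simpa using hrefl (-x) (by linarith)
  obtain ⟨m, -, hmI⟩ := isCompact_Icc.exists_isMinOn (nonempty_Icc.2 h.lt.le) hcV.continuousOn
  have hzI : z ∈ Icc x1 x2 := by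
    by_contra hn
    exact hz.ne (h.V_zero z fun hh => hn (Ioo_subset_Icc_self hh))
  have hVm : V m < 0 := (hmI hzI : V m ≤ V z).trans_lt hz
  have hmin : ∀ x, V m ≤ V x := by
    intro x
    by_cases hx : x ∈ Icc x1 x2
    · exact hmI hx
    · rw [h.V_zero x fun hh => hx (Ioo_subset_Icc_self hh)]
      exact hVm.le
  have hml : x1l < m := by
    by_contra! hh
    exact absurd (hleft m hh) (not_le.2 hVm)
  have hmr : m < x2r := by
    by_contra! hh
    exact absurd (hright m hh) (not_le.2 hVm)
  -- For `m ≥ x2l` the minimizer propagates to the left, hence the reflection.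
  rcases lt_or_ge m x2l with hm | hm
  · exact h.no_neg_min hlam hr hm hmin hVm
      (fun x hx => (hzero x (Or.inl ⟨hml.le.trans hx.1, hx.2⟩)).ge) hpos
  · refine h.reflect.no_neg_min (x1r := -x2l) (x2l := -x1r) (m := -m) hlam (by linarith)
      (by linarith) (fun x => by simpa using hmin (-x)) (by simpa using hVm)
      (fun x hx => (hzero (-x) (Or.inr ⟨by linarith [hx.2], by linarith [hx.1]⟩)).ge)
      fun x hx => hpos (-x) ⟨by linarith [hx.2], by linarith [hx.1]⟩
end
end

section
/- If (V, x1*, x2*) is a nontrivial solution of the free boundary problem (2.11)–(2.14), then x1* < x1ℓ and x2* > x2r. -/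
/-!
Two facts carry the proof: a comparison principle for initial value problems, and the observation
that a solution of the free boundary problem has zero Cauchy data at both end points.

Suppose `x1l ≤ x1`. Then on `(x1, x2)` the function `f` is nonnegative up to some point `c` and
nonpositive after it (`c` is `x2r`, clamped to `[x1, x2]`). To the left of `c` the equation gives
`V'' ≤ p V + q |V'|` with the nonnegative locally integrable functions `p = 2 λ / σ²` and
`q = 2 |b| / σ²`; since `V` and `V'` vanish at `x1`, `forward_nonpos` yields `V' ≤ 0` on
`[x1, c]`. To the right of `c` the reversed inequality together with the vanishing of `V` and `V'`
at `x2` yields `V' ≤ 0` on `[c, x2]` (`backward_nonpos`). Hence `V` is nonincreasing on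
`[x1, x2]` and vanishes at both ends, so `V = 0`, which is `trivial_of_sign_change`.

If instead `x2 ≤ x2r`, then `f` is nonpositive and later nonnegative (`c` is now `x1l`, clamped),
and the same lemma applies to `-V`, a solution for the right-hand side `-f`.
-/

open MeasureTheory Set Filter

noncomputable section

/-- classical ε-δ absolute continuity of `F` on `[a,b]` -/
def AbsCont (F : ℝ → ℝ) (a b : ℝ) : Prop :=
  ∀ ε > 0, ∃ δ > 0, ∀ n : ℕ, ∀ s t : Fin n → ℝ,
    (∀ i, a ≤ s i ∧ s i ≤ t i ∧ t i ≤ b) →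
    (Pairwise fun i j => Disjoint (Set.Ioo (s i) (t i)) (Set.Ioo (s j) (t j))) →
    (∑ i, (t i - s i)) < δ → (∑ i, |F (t i) - F (s i)|) < ε

/-- a solution of the free boundary problem (2.11)–(2.14): `V = 0` outside `(x1, x2)`,
`V ∈ C¹([x1, x2])` (with one-sided derivatives at the endpoints) with
`V′(x1) = V′(x2) = 0`, `V′` absolutely continuous on `[x1, x2]`, and
`(σ²/2)·V″ + b·V′ − λ·V = −f` Lebesgue-a.e. on `(x1, x2)`, where `V″` is the
a.e.-defined derivative of `V′`. -/
def SolFBP1114 (b σ f : ℝ → ℝ) (lam : ℝ) (V : ℝ → ℝ) (x1 x2 : ℝ) : Prop :=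
  x1 < x2 ∧
  (∀ x ∉ Set.Ioo x1 x2, V x = 0) ∧
  ∃ V' : ℝ → ℝ,
    (∀ x ∈ Set.Icc x1 x2, HasDerivWithinAt V (V' x) (Set.Icc x1 x2) x) ∧
    ContinuousOn V' (Set.Icc x1 x2) ∧
    V' x1 = 0 ∧ V' x2 = 0 ∧
    AbsCont V' x1 x2 ∧
    ∀ᵐ x, x ∈ Set.Ioo x1 x2 → ∃ d, HasDerivAt V' d x ∧
      (σ x) ^ 2 / 2 * d + b x * V' x - lam * V x = -f x

lemma AbsCont.absolutelyContinuousOnInterval {F : ℝ → ℝ} {a b : ℝ} (hab : a ≤ b)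
    (h : AbsCont F a b) : AbsolutelyContinuousOnInterval F a b := by
  rw [absolutelyContinuousOnInterval_iff]
  intro ε hε
  obtain ⟨δ, hδ, H⟩ := h ε hε
  refine ⟨δ, hδ, ?_⟩
  rintro ⟨n, I⟩ ⟨hI, hdisj⟩ hlen
  simp only [uIcc_of_le hab, Finset.mem_range, mem_Icc] at hI hdisj hlen ⊢
  have key := H n (fun i => min (I i).1 (I i).2) (fun i => max (I i).1 (I i).2) ?_ ?_ ?_
  · rw [← Fin.sum_univ_eq_sum_range (fun i => dist (F (I i).1) (F (I i).2))]
    refine lt_of_eq_of_lt (Finset.sum_congr rfl fun i _ => ?_) key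
    rcases le_total (I i).1 (I i).2 with h | h
    · simp [h, Real.dist_eq, abs_sub_comm]
    · simp [h, Real.dist_eq]
  · intro i
    have := hI i i.2
    exact ⟨le_min this.1.1 this.2.1, min_le_max, max_le this.1.2 this.2.2⟩
  · intro i j hij
    have := hdisj (x := (i : ℕ)) (by simp) (y := (j : ℕ)) (by simp)
      (by simpa [Fin.ext_iff] using hij)
    exact Disjoint.mono Ioo_subset_Ioc_self Ioo_subset_Ioc_self this
  · rw [← Fin.sum_univ_eq_sum_range (fun i => dist (I i).1 (I i).2)] at hlen
    refine lt_of_eq_of_lt (Finset.sum_congr rfl fun i _ => ?_) hlen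
    rw [Real.dist_eq, max_sub_min_eq_abs']

lemma AbsCont.mono {F : ℝ → ℝ} {a b a' b' : ℝ} (h : AbsCont F a b) (ha : a ≤ a')
    (hb : b' ≤ b) : AbsCont F a' b' := by
  intro ε hε
  obtain ⟨δ, hδ, H⟩ := h ε hε
  exact ⟨δ, hδ, fun n s t hst => H n s t fun i =>
    ⟨ha.trans (hst i).1, (hst i).2.1, (hst i).2.2.trans hb⟩⟩

lemma AbsCont.neg {F : ℝ → ℝ} {a b : ℝ} (h : AbsCont F a b) :
    AbsCont (fun x => -F x) a b := by
  intro ε hε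
  obtain ⟨δ, hδ, H⟩ := h ε hε
  refine ⟨δ, hδ, fun n s t h1 h2 h3 => ?_⟩
  refine lt_of_eq_of_lt (Finset.sum_congr rfl fun i _ => ?_) (H n s t h1 h2 h3)
  rw [← abs_neg]
  ring_nf

lemma AbsCont.comp_neg {F : ℝ → ℝ} {a b : ℝ} (h : AbsCont F a b) :
    AbsCont (fun x => F (-x)) (-b) (-a) := by
  intro ε hε
  obtain ⟨δ, hδ, H⟩ := h ε hε
  refine ⟨δ, hδ, fun n s t h1 h2 h3 => ?_⟩
  have key := H n (fun i => -t i) (fun i => -s i) ?_ ?_ ?_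
  · simpa only [abs_sub_comm] using key
  · intro i
    have := h1 i
    refine ⟨?_, ?_, ?_⟩ <;> linarith
  · intro i j hij
    have : Disjoint (Ioo (s i) (t i)) (Ioo (s j) (t j)) := h2 hij
    rw [Set.disjoint_left] at this ⊢
    intro x hx hx'
    exact this (a := -x) ⟨by linarith [hx.2], by linarith [hx.1]⟩
      ⟨by linarith [hx'.2], by linarith [hx'.1]⟩
  · refine lt_of_eq_of_lt (Finset.sum_congr rfl fun i _ => ?_) h3
    ring

lemma sub_le_of_deriv_le {U g : ℝ → ℝ} {a c M u v : ℝ}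
    (hU : ∀ x ∈ Icc a c, HasDerivWithinAt U (g x) (Icc a c) x)
    (hau : a ≤ u) (huv : u ≤ v) (hvc : v ≤ c) (hM : ∀ x ∈ Icc u v, g x ≤ M) :
    U v - U u ≤ M * (v - u) := by
  have hsub : Icc u v ⊆ Icc a c := Icc_subset_Icc hau hvc
  have hder : ∀ x ∈ Ioo u v, HasDerivAt U (g x) x := fun x hx =>
    (hU x (hsub (Ioo_subset_Icc_self hx))).hasDerivAt
      (Icc_mem_nhds (hau.trans_lt hx.1) (hx.2.trans_le hvc))
  refine (convex_Icc u v).image_sub_le_mul_sub_of_deriv_le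
    (fun x hx => ((hU x (hsub hx)).mono hsub).continuousWithinAt) ?_ ?_
    u (left_mem_Icc.2 huv) v (right_mem_Icc.2 huv) huv
  · rw [interior_Icc]
    exact fun x hx => (hder x hx).differentiableAt.differentiableWithinAt
  · rw [interior_Icc]
    intro x hx
    rw [(hder x hx).deriv]
    exact hM x (Ioo_subset_Icc_self hx)

/-- Comparison principle for the initial value problem: a function `U` with derivative `g` that
starts with `U a ≤ 0`, `g a ≤ 0` and satisfies `g' ≤ p U + q |g|` a.e., with nonnegative locally
integrable `p`, `q`, is nonincreasing. Just to the right of the first point `s` at which `g`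
turns positive, the maximum `M` of `g` would satisfy `M ≤ M ∫ (p + q) ≤ M / 2`. -/
lemma forward_nonpos {p q g U : ℝ → ℝ} {a c : ℝ}
    (hp0 : ∀ x, 0 ≤ p x) (hq0 : ∀ x, 0 ≤ q x)
    (hp : ∀ u v, IntervalIntegrable p volume u v) (hq : ∀ u v, IntervalIntegrable q volume u v)
    (hU : ∀ x ∈ Icc a c, HasDerivWithinAt U (g x) (Icc a c) x)
    (hg : ContinuousOn g (Icc a c)) (hUa : U a ≤ 0) (hga : g a ≤ 0) (hAC : AbsCont g a c)
    (hode : ∀ᵐ x, x ∈ Ioo a c → ∃ d, HasDerivAt g d x ∧ d ≤ p x * U x + q x * |g x|) :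
    ∀ x ∈ Icc a c, g x ≤ 0 := by
  by_contra! hcon
  set S : Set ℝ := {x | x ∈ Icc a c ∧ 0 < g x} with hS
  have hSne : S.Nonempty := hcon
  have hSbdd : BddBelow S := ⟨a, fun x hx => hx.1.1⟩
  set s := sInf S with hs
  obtain ⟨x0, hx0, hgx0⟩ := hcon
  have has : a ≤ s := le_csInf hSne fun x hx => hx.1.1
  have hsx0 : s ≤ x0 := csInf_le hSbdd ⟨hx0, hgx0⟩
  have hsc : s ≤ c := hsx0.trans hx0.2
  have hlt : ∀ x, a ≤ x → x < s → g x ≤ 0 := by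
    intro x hax hxs
    by_contra! h
    exact absurd (csInf_le hSbdd (show x ∈ S from ⟨⟨hax, hxs.le.trans hsc⟩, h⟩)) (not_le.2 hxs)
  have hgs : g s ≤ 0 := by
    rcases eq_or_lt_of_le has with h | h
    · rwa [← h]
    · by_contra! hpos
      have hcl : s ∈ closure (Ico a s) := by
        rw [closure_Ico h.ne]
        exact ⟨has, le_rfl⟩
      have := (hg s ⟨has, hsc⟩).mono (Ico_subset_Icc_self.trans (Icc_subset_Icc_right hsc) :
        Ico a s ⊆ Icc a c)
      have hmaps : MapsTo g (Ico a s) (Iic 0) := fun x hx => hlt x hx.1 hx.2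
      have hle := this.mem_closure hcl hmaps
      rw [isClosed_Iic.closure_eq] at hle
      exact absurd hle (not_le.2 hpos)
  have hs_lt : s < c := by
    rcases eq_or_lt_of_le hsx0 with h | h
    · rw [h] at hgs; linarith
    · exact h.trans_le hx0.2
  have hUs : U s ≤ 0 := by
    have := sub_le_of_deriv_le (M := 0) hU le_rfl has hsc (fun x hx => by
      rcases eq_or_lt_of_le hx.2 with h | h
      · rwa [h]
      · exact hlt x hx.1 h)
    linarith
  -- a short interval `[s, t]` carrying at most mass `1/2` of the kernel `p + q`
  have hk : ∀ u v, IntervalIntegrable (fun x => p x + q x) volume u v := fun u v =>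
    (hp u v).add (hq u v)
  have hcont : Continuous fun x => ∫ y in s..x, (p y + q y) :=
    intervalIntegral.continuous_primitive hk s
  have hev : ∀ᶠ t in nhdsWithin s (Ioi s), (∫ y in s..t, (p y + q y)) < 1 / 2 := by
    have h0 : (∫ y in s..s, (p y + q y)) < 1 / 2 := by simp
    exact nhdsWithin_le_nhds (hcont.continuousAt.eventually_lt_const h0)
  obtain ⟨t, ⟨⟨htk, htc, ht1⟩, hst⟩⟩ := ((hev.and
    ((eventually_nhdsWithin_of_eventually_nhds (eventually_lt_nhds hs_lt)).and
      (eventually_nhdsWithin_of_eventually_nhds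
        (eventually_lt_nhds (show s < s + 1 by linarith))))).and
      eventually_mem_nhdsWithin).exists
  rw [mem_Ioi] at hst
  have hsub : Icc s t ⊆ Icc a c := Icc_subset_Icc has htc.le
  obtain ⟨m, hm, hmax⟩ := isCompact_Icc.exists_isMaxOn (nonempty_Icc.2 hst.le) (hg.mono hsub)
  have hmax' : ∀ x ∈ Icc s t, g x ≤ g m := fun x hx => hmax hx
  have hMpos : 0 < g m := by
    obtain ⟨y, hyS, hyt⟩ := exists_lt_of_csInf_lt hSne (show sInf S < t from hst)
    exact hyS.2.trans_le (hmax' y ⟨csInf_le hSbdd hyS, hyt.le⟩)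
  -- the last point `r` before `m` at which `g` is nonpositive
  set R : Set ℝ := {x | x ∈ Icc s m ∧ g x ≤ 0} with hR
  have hsubm : Icc s m ⊆ Icc a c := (Icc_subset_Icc_right hm.2).trans hsub
  have hRcl : IsClosed R := by
    have := (hg.mono hsubm).preimage_isClosed_of_isClosed isClosed_Icc (isClosed_Iic (a := (0:ℝ)))
    exact this
  have hRne : R.Nonempty := ⟨s, ⟨le_rfl, hm.1⟩, hgs⟩
  have hRbdd : BddAbove R := ⟨m, fun x hx => hx.1.2⟩
  have hrR : sSup R ∈ R := hRcl.csSup_mem hRne hRbdd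
  set r := sSup R with hr
  have hrpos : ∀ x ∈ Ioc r m, 0 < g x := by
    intro x hx
    by_contra! h
    exact absurd (le_csSup hRbdd (show x ∈ R from ⟨⟨hrR.1.1.trans hx.1.le, hx.2⟩, h⟩))
      (not_le.2 hx.1)
  have hUle : ∀ x ∈ Icc s t, U x ≤ g m := by
    intro x hx
    have h1 := sub_le_of_deriv_le (M := g m) hU has hx.1 (hx.2.trans htc.le)
      (fun y hy => hmax' y ⟨hy.1, hy.2.trans hx.2⟩)
    have h2 : g m * (x - s) ≤ g m * 1 := by
      apply mul_le_mul_of_nonneg_left _ hMpos.le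
      linarith [hx.2]
    linarith
  have hACr : AbsolutelyContinuousOnInterval g r m :=
    (hAC.mono (has.trans hrR.1.1) (hm.2.trans htc.le)).absolutelyContinuousOnInterval hrR.1.2
  have hFTC := hACr.integral_deriv_eq_sub
  have hle1 : (∫ x in r..m, deriv g x) ≤ ∫ x in r..m, g m * (p x + q x) := by
    apply intervalIntegral.integral_mono_ae_restrict hrR.1.2 hACr.intervalIntegrable_deriv
      ((hk r m).const_mul _)
    rw [← restrict_Ioo_eq_restrict_Icc]
    rw [Filter.EventuallyLE, ae_restrict_iff' measurableSet_Ioo]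
    filter_upwards [hode] with x hx hxm
    obtain ⟨d, hd, hdle⟩ := hx ⟨(has.trans hrR.1.1).trans_lt hxm.1,
      hxm.2.trans_le (hm.2.trans htc.le)⟩
    rw [hd.deriv]
    have hxst : x ∈ Icc s t := ⟨hrR.1.1.trans hxm.1.le, hxm.2.le.trans hm.2⟩
    have hgx := hrpos x ⟨hxm.1, hxm.2.le⟩
    rw [abs_of_pos hgx] at hdle
    have e1 := mul_le_mul_of_nonneg_left (hUle x hxst) (hp0 x)
    have e2 := mul_le_mul_of_nonneg_left (hmax' x hxst) (hq0 x)
    linarith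
  rw [hFTC, intervalIntegral.integral_const_mul] at hle1
  have hle2 : (∫ x in r..m, (p x + q x)) ≤ ∫ x in s..t, (p x + q x) :=
    intervalIntegral.integral_mono_interval hrR.1.1 hrR.1.2 hm.2
      (Eventually.of_forall fun x => add_nonneg (hp0 x) (hq0 x)) (hk s t)
  have hgr := hrR.2
  nlinarith

/-- The comparison principle started from the right end point, obtained from `forward_nonpos`
by applying it to `x ↦ -V (-x)`. -/
lemma backward_nonpos {p q g V : ℝ → ℝ} {a c : ℝ}
    (hp0 : ∀ x, 0 ≤ p x) (hq0 : ∀ x, 0 ≤ q x)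
    (hp : ∀ u v, IntervalIntegrable p volume u v) (hq : ∀ u v, IntervalIntegrable q volume u v)
    (hV : ∀ x ∈ Icc a c, HasDerivWithinAt V (g x) (Icc a c) x)
    (hg : ContinuousOn g (Icc a c)) (hVc : 0 ≤ V c) (hgc : g c ≤ 0) (hAC : AbsCont g a c)
    (hode : ∀ᵐ x, x ∈ Ioo a c → ∃ d, HasDerivAt g d x ∧ p x * V x - q x * |g x| ≤ d) :
    ∀ x ∈ Icc a c, g x ≤ 0 := by
  have hmaps : MapsTo (fun x : ℝ => -x) (Icc (-c) (-a)) (Icc a c) := fun x hx =>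
    ⟨by linarith [hx.2], by linarith [hx.1]⟩
  have key := forward_nonpos (p := fun x => p (-x)) (q := fun x => q (-x))
    (g := fun x => g (-x)) (U := fun x => -V (-x)) (a := -c) (c := -a)
    (fun x => hp0 _) (fun x => hq0 _)
    (fun u v => by simpa using (IntervalIntegrable.iff_comp_neg (by simp)).mp (hp (-u) (-v)))
    (fun u v => by simpa using (IntervalIntegrable.iff_comp_neg (by simp)).mp (hq (-u) (-v)))
    ?_ (hg.comp continuous_neg.continuousOn hmaps) (by simpa using hVc) (by simpa using hgc)
    hAC.comp_neg ?_
  · intro x hx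
    simpa using key (-x) ⟨by linarith [hx.2], by linarith [hx.1]⟩
  · intro x hx
    have h1 := (hV (-x) (hmaps hx)).scomp x (hasDerivAt_neg x).hasDerivWithinAt hmaps
    simpa using! h1.neg
  · have hqm := (Measure.measurePreserving_neg (volume : Measure ℝ)).quasiMeasurePreserving
    filter_upwards [hqm.ae hode] with x hx hxm
    obtain ⟨d, hd, hdle⟩ := hx ⟨by linarith [hxm.2], by linarith [hxm.1]⟩
    refine ⟨-d, ?_, by linarith⟩
    simpa using! hd.scomp x (hasDerivAt_neg x)

/-- If the right-hand side `f` is nonnegative to the left of some point `c` of `[x1, x2]` and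
nonpositive to its right, the free boundary problem has only the trivial solution. -/
lemma trivial_of_sign_change {b σ f : ℝ → ℝ} {lam : ℝ} (hlam : 0 ≤ lam) (hES : ES b σ)
    {V : ℝ → ℝ} {x1 x2 c : ℝ} (hsol : SolFBP1114 b σ f lam V x1 x2)
    (h1c : x1 ≤ c) (hc2 : c ≤ x2)
    (hpos : ∀ x ∈ Ioo x1 c, 0 ≤ f x) (hneg : ∀ x ∈ Ioo c x2, f x ≤ 0) : ∀ x, V x = 0 := by
  obtain ⟨-, -, hσ, hi1, hi2⟩ := hES
  obtain ⟨h12, hV0, g, hV, hg, hg1, hg2, hAC, hode⟩ := hsol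
  set p : ℝ → ℝ := fun x => 2 * lam * (1 / (σ x) ^ 2) with hp
  set q : ℝ → ℝ := fun x => 2 * |b x / (σ x) ^ 2| with hq
  have hp0 : ∀ x, 0 ≤ p x := fun x => by positivity
  have hq0 : ∀ x, 0 ≤ q x := fun x => by positivity
  have hpi : ∀ u v, IntervalIntegrable p volume u v := fun u v =>
    ((hi1.integrableOn_isCompact isCompact_uIcc).intervalIntegrable).const_mul _
  have hqi : ∀ u v, IntervalIntegrable q volume u v := fun u v =>
    ((hi2.integrableOn_isCompact isCompact_uIcc).intervalIntegrable).abs.const_mul _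
  have hV1 : V x1 = 0 := hV0 x1 (by simp)
  have hV2 : V x2 = 0 := hV0 x2 (by simp)
  -- solving the equation for `V''`
  have hsolve : ∀ x d, (σ x) ^ 2 / 2 * d + b x * g x - lam * V x = -f x →
      d = p x * V x - 2 * (b x / (σ x) ^ 2) * g x - 2 * f x / (σ x) ^ 2 := by
    intro x d h
    have := hσ x
    simp only [hp]
    field_simp
    linarith
  have habs : ∀ x, |2 * (b x / (σ x) ^ 2) * g x| = q x * |g x| := by
    intro x
    simp only [hq, abs_mul, abs_two]
  have hs1 : Icc x1 c ⊆ Icc x1 x2 := Icc_subset_Icc_right hc2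
  have hs2 : Icc c x2 ⊆ Icc x1 x2 := Icc_subset_Icc_left h1c
  have hleft : ∀ x ∈ Icc x1 c, g x ≤ 0 := by
    refine forward_nonpos hp0 hq0 hpi hqi (fun x hx => (hV x (hs1 hx)).mono hs1)
      (hg.mono hs1) hV1.le hg1.le (hAC.mono le_rfl hc2) ?_
    filter_upwards [hode] with x hx hxm
    obtain ⟨d, hd, he⟩ := hx ⟨hxm.1, hxm.2.trans_le hc2⟩
    refine ⟨d, hd, ?_⟩
    have h1 := hsolve x d he
    have h2 := neg_abs_le (2 * (b x / (σ x) ^ 2) * g x)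
    have h3 : 0 ≤ 2 * f x / (σ x) ^ 2 := by
      have := hpos x hxm
      positivity
    rw [habs] at h2
    linarith
  have hright : ∀ x ∈ Icc c x2, g x ≤ 0 := by
    refine backward_nonpos hp0 hq0 hpi hqi (fun x hx => (hV x (hs2 hx)).mono hs2)
      (hg.mono hs2) hV2.ge hg2.le (hAC.mono h1c le_rfl) ?_
    filter_upwards [hode] with x hx hxm
    obtain ⟨d, hd, he⟩ := hx ⟨h1c.trans_lt hxm.1, hxm.2⟩
    refine ⟨d, hd, ?_⟩
    have h1 := hsolve x d he
    have h2 := le_abs_self (2 * (b x / (σ x) ^ 2) * g x)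
    have h3 : 2 * f x / (σ x) ^ 2 ≤ 0 :=
      div_nonpos_of_nonpos_of_nonneg (by linarith [hneg x hxm]) (by positivity)
    rw [habs] at h2
    linarith
  have hg0 : ∀ x ∈ Icc x1 x2, g x ≤ 0 := by
    intro x hx
    rcases le_total x c with h | h
    · exact hleft x ⟨hx.1, h⟩
    · exact hright x ⟨h, hx.2⟩
  intro x
  by_cases hx : x ∈ Ioo x1 x2
  · have h1 := sub_le_of_deriv_le (M := 0) hV le_rfl hx.1.le hx.2.le
      (fun y hy => hg0 y ⟨hy.1, hy.2.trans hx.2.le⟩)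
    have h2 := sub_le_of_deriv_le (M := 0) hV hx.1.le hx.2.le le_rfl
      (fun y hy => hg0 y ⟨hx.1.le.trans hy.1, hy.2⟩)
    linarith
  · exact hV0 x hx

lemma SolFBP1114.neg {b σ f : ℝ → ℝ} {lam : ℝ} {V : ℝ → ℝ} {x1 x2 : ℝ}
    (h : SolFBP1114 b σ f lam V x1 x2) :
    SolFBP1114 b σ (fun x => -f x) lam (fun x => -V x) x1 x2 := by
  obtain ⟨h12, hV0, g, hV, hg, hg1, hg2, hAC, hode⟩ := h
  refine ⟨h12, fun x hx => by simp [hV0 x hx], fun x => -g x, fun x hx => (hV x hx).neg,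
    hg.neg, by simp [hg1], by simp [hg2], hAC.neg, ?_⟩
  filter_upwards [hode] with x hx hxm
  obtain ⟨d, hd, he⟩ := hx hxm
  exact ⟨-d, hd.neg, by linarith⟩

/-- **Proposition 2.9.** If `(V, x1*, x2*)` is a nontrivial solution of the free boundary
problem (2.11)–(2.14), then `x1* < x1ℓ` and `x2* > x2r`. -/
theorem prop29
    (b σ f : ℝ → ℝ) (lam : ℝ) (hlam : 0 ≤ lam)
    (hES : ES b σ) (hmf : Measurable f)
    (x1l x1r x2l x2r : ℝ) (hf : Shape f x1l x1r x2l x2r)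
    (h23 : Cond23 f σ x1l x1r x2l x2r)
    (V : ℝ → ℝ) (x1 x2 : ℝ)
    (hsol : SolFBP1114 b σ f lam V x1 x2) (hnt : ∃ x, V x ≠ 0) :
    x1 < x1l ∧ x2r < x2 := by
  obtain ⟨h1, h2, h3, hfpos, hfzero, hfneg⟩ := hf
  have hmid : ∀ x, x1l ≤ x → x ≤ x2r → 0 ≤ f x := by
    intro x hx hx'
    rcases le_or_gt x x1r with ha | ha
    · exact (hfzero x (Or.inl ⟨hx, ha⟩)).ge
    · rcases lt_or_ge x x2l with hb | hb
      · exact (hfpos x ⟨ha, hb⟩).le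
      · exact (hfzero x (Or.inr ⟨hb, hx'⟩)).ge
  have h12 : x1 < x2 := hsol.1
  obtain ⟨x0, hx0⟩ := hnt
  constructor
  · by_contra! hcon
    refine hx0 (trivial_of_sign_change hlam hES hsol (c := max x1 (min x2 x2r))
      (le_max_left _ _) (max_le h12.le (min_le_left _ _)) ?_ ?_ x0)
    · intro x hx
      have hx2 : x < min x2 x2r := (lt_max_iff.1 hx.2).resolve_left hx.1.not_gt
      exact hmid x (hcon.trans hx.1.le) (hx2.le.trans (min_le_right _ _))
    · intro x hx
      have hx1 : min x2 x2r < x := (le_max_right _ _).trans_lt hx.1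
      have hx2 : x2r < x := (min_lt_iff.1 hx1).resolve_left hx.2.not_gt
      exact (hfneg x (Or.inr hx2)).le
  · by_contra! hcon
    have h0 := trivial_of_sign_change hlam hES hsol.neg (c := max x1 (min x2 x1l))
      (le_max_left _ _) (max_le h12.le (min_le_left _ _)) ?_ ?_ x0
    · exact hx0 (neg_eq_zero.1 h0)
    · intro x hx
      have hx2 : x < min x2 x1l := (lt_max_iff.1 hx.2).resolve_left hx.1.not_gt
      exact (neg_pos.2 (hfneg x (Or.inl (hx2.trans_le (min_le_right _ _))))).le
    · intro x hx
      have hx1 : min x2 x1l < x := (le_max_right _ _).trans_lt hx.1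
      have hx2 : x1l < x := (min_lt_iff.1 hx1).resolve_left hx.2.not_gt
      exact neg_nonpos.2 (hmid x hx2.le (hx.2.le.trans hcon))
end
end
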